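/- arXiv:2110.10265 — 2 statements merged into one kernel-verified Lean document; each statement's English description precedes it below -/
import Mathlib

section
/- Let T be the left shift on X = {1,…,ℓ}^ℤ, let μ be a T-invariant Borel probability measure, let μ⁺ = (P₊)_*μ be the induced T₊-invariant measure on the one-sided shift X⁺, and let J_{μ⁺}T₊ denote the Jacobian of the one-sided shift T₊ with respect to μ⁺. If J_{μ⁺}T₊ is strictly positive and Hölder continuous, then μ has local product structure with Hölder continuous density. -/
/-!
Let `ν = P₊ μ` and `L = log J`. Iterating the Jacobian relation along inverse branches and using the
invariance of `μ`, the law of `(past, future)` under `μ` satisfies, for every past `p`,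
`law (cylM n p ×ˢ B) = ∫_B exp (-∑_{k ≤ n} L (p₋ₖ … p₀ y)) dν(y)` (`map_cylM_prod`). Hence the future
has, given the word `p₋ₙ … p₀`, the density `exp (-∑_{k ≤ n} L (p₋ₖ … p₀ y))` with respect to `ν`,
up to normalization.

Subtracting from each summand its value at a fixed reference future `y₀` changes this density by a
factor depending on the past only, which normalization removes. Since `L` is Hölder and inverse
branches contract by `1/2`, the sum of differences converges uniformly as `n → ∞` to a Hölder
function on `X⁻ × X⁺`, the `cocycle`. So `kap = exp (-cocycle) / ∫ exp (-cocycle) dν` is positive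
and Hölder, and on each product `cylM n p ×ˢ B` the law agrees with `kap · (P₋ μ × ν)` up to a factor
`exp (± 2 εₙ)` with `εₙ → 0` (`branchWeight_compare`). Splitting a cylinder into deeper and deeper
ones shows that the two measures coincide (`eq_of_cylM_le`, `map_eq_withDensity`).

Restricting to `x₀ = i`, the marginal on the future becomes `ν` divided by `J (i y)`
(`map_Pp_restrict_cyl`), so the density of the local product structure is
`ρ (p, y) = kap (p, y) · J (p₀ y)`.
-/

open MeasureTheory Filter Matrix Set

noncomputable section

attribute [local instance] Matrix.linftyOpNormedAddCommGroup Matrix.linftyOpNormedRing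
attribute [local instance] Classical.propDecidable

/-- The two-sided shift space on `ℓ` symbols. -/
abbrev XX (ℓ : ℕ) := ℤ → Fin ℓ
/-- The one-sided space of past coordinates `X⁻`. -/
abbrev Xm (ℓ : ℕ) := {n : ℤ // n ≤ 0} → Fin ℓ
/-- The one-sided space of future coordinates `X⁺`. -/
abbrev Xp (ℓ : ℕ) := {n : ℤ // 0 < n} → Fin ℓ

variable {ℓ d : ℕ}

/-- The left shift `T`. -/
def shiftT (x : XX ℓ) : XX ℓ := fun i => x (i + 1)
/-- The inverse (right) shift `T⁻¹`. -/
def shiftInv (x : XX ℓ) : XX ℓ := fun i => x (i - 1)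

def Pm (x : XX ℓ) : Xm ℓ := fun n => x n.1
def Pp (x : XX ℓ) : Xp ℓ := fun n => x n.1

/-- distance on `X`: `d(x,y) = 2^{-min{ i ≥ 0 : x_i ≠ y_i or x_{-i} ≠ y_{-i}}}`. -/
def distX (x y : XX ℓ) : ℝ :=
  if x = y then 0
  else (2 : ℝ) ^ (-((sInf {n : ℕ | x (n : ℤ) ≠ y (n : ℤ) ∨ x (-(n : ℤ)) ≠ y (-(n : ℤ))} : ℕ) : ℤ))

/-- distance on `X⁻`. -/
def distXm (x y : Xm ℓ) : ℝ :=
  if x = y then 0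
  else (2 : ℝ) ^ (-((sInf {n : ℕ | x ⟨-(n : ℤ), by omega⟩ ≠ y ⟨-(n : ℤ), by omega⟩} : ℕ) : ℤ))

/-- distance on `X⁺`. -/
def distXp (x y : Xp ℓ) : ℝ :=
  if x = y then 0
  else (2 : ℝ) ^ (-((sInf {n : ℕ | x ⟨(n : ℤ) + 1, by omega⟩ ≠ y ⟨(n : ℤ) + 1, by omega⟩} : ℕ) : ℤ))

/-- local stable set. -/
def WsLoc (x : XX ℓ) : Set (XX ℓ) := {y | ∀ n : ℤ, 0 ≤ n → y n = x n}
/-- local unstable set. -/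
def WuLoc (x : XX ℓ) : Set (XX ℓ) := {y | ∀ n : ℤ, n ≤ 0 → y n = x n}

/-- cylinder `[i] = {x : x₀ = i}`. -/
def cyl (i : Fin ℓ) : Set (XX ℓ) := {x | x 0 = i}

/-- `μ` has local product structure with Hölder density `ρ`. -/
def HasLocalProductHolder (μ : Measure (XX ℓ)) : Prop :=
  ∃ (ρ : Xm ℓ × Xp ℓ → ℝ) (α C : ℝ), 0 < α ∧
    (∀ z, 0 < ρ z) ∧
    (∀ z w, |ρ z - ρ w| ≤ C * max (distXm z.1 w.1) (distXp z.2 w.2) ^ α) ∧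
    (∀ i : Fin ℓ,
      (μ.restrict (cyl i)).map (fun x => (Pm x, Pp x)) =
        ((((μ.restrict (cyl i)).map Pm).prod ((μ.restrict (cyl i)).map Pp)).withDensity
          (fun z => ENNReal.ofReal (ρ z))))
/-- the one-sided (non-invertible) left shift `T₊` on `X⁺`. -/
def shiftP (x : Xp ℓ) : Xp ℓ := fun n => x ⟨(n : ℤ) + 1, by have := n.2; omega⟩

/-- cylinder `[i] ⊆ X⁺` (an injectivity domain of `T₊`). -/
def cylP (i : Fin ℓ) : Set (Xp ℓ) := {x : Xp ℓ | x ⟨1, by norm_num⟩ = i}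

/-! ### Concatenation and the metrics -/

/-- The sequence `j y₁ y₂ …` obtained by prepending the symbol `j` to `y`. -/
def consP (j : Fin ℓ) (y : Xp ℓ) : Xp ℓ :=
  fun m => if h : (m : ℤ) = 1 then j else y ⟨m - 1, by have := m.2; omega⟩

/-- The symbol at position `-k` of a past `p`. -/
def past (p : Xm ℓ) (k : ℕ) : Fin ℓ := p ⟨-(k : ℤ), by omega⟩

/-- The sequence `p₋ₖ … p₋₁ p₀ y₁ y₂ …`, re-indexed so as to start at position `1`. -/
def conc (p : Xm ℓ) (y : Xp ℓ) : ℕ → Xp ℓ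
  | 0 => consP (past p 0) y
  | k + 1 => consP (past p (k + 1)) (conc p y k)

lemma shiftP_consP (j : Fin ℓ) (y : Xp ℓ) : shiftP (consP j y) = y := by
  funext m
  have := m.2
  have h : ¬ ((m : ℤ) = 0) := by omega
  simp [shiftP, consP, h]

lemma consP_mem (j : Fin ℓ) (y : Xp ℓ) : consP j y ∈ cylP j := by
  simp [cylP, consP]

lemma consP_shiftP {j : Fin ℓ} {z : Xp ℓ} (hz : z ∈ cylP j) : consP j (shiftP z) = z := by
  funext m
  rcases m with ⟨m, hm⟩
  by_cases h : m = 1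
  · subst h
    simpa [consP, eq_comm, cylP] using hz
  · simp [consP, shiftP, h]

lemma conc_congr {p q : Xm ℓ} (y : Xp ℓ) (k : ℕ) (h : ∀ i ≤ k, past p i = past q i) :
    conc p y k = conc q y k := by
  induction k with
  | zero => simp [conc, h 0 le_rfl]
  | succ k ih => rw [conc, conc, h (k + 1) le_rfl, ih fun i hi => h i (by omega)]

lemma distXp_nonneg (y z : Xp ℓ) : 0 ≤ distXp y z := by
  unfold distXp; split_ifs <;> positivity

lemma distXm_nonneg (y z : Xm ℓ) : 0 ≤ distXm y z := by
  unfold distXm; split_ifs <;> positivity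

lemma zpow_neg_eq (n : ℕ) : (2 : ℝ) ^ (-(n : ℤ)) = (1 / 2) ^ n := by
  rw [_root_.zpow_neg, zpow_natCast, one_div, inv_pow]

/-- Position of the first disagreement of two distinct futures. -/
lemma exists_distXp {y z : Xp ℓ} (h : y ≠ z) :
    ∃ n : ℕ, distXp y z = (1 / 2) ^ n ∧ (∀ k < n, y ⟨(k : ℤ) + 1, by omega⟩ = z ⟨(k : ℤ) + 1, by omega⟩)
      ∧ y ⟨(n : ℤ) + 1, by omega⟩ ≠ z ⟨(n : ℤ) + 1, by omega⟩ := by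
  refine ⟨_, (by unfold distXp; rw [if_neg h, zpow_neg_eq]), ?_, ?_⟩
  · intro k hk
    have := Nat.notMem_of_lt_sInf hk
    simpa using this
  · refine Nat.sInf_mem (s := {n : ℕ | y ⟨(n : ℤ) + 1, by omega⟩ ≠ z ⟨(n : ℤ) + 1, by omega⟩}) ?_
    by_contra hne
    rw [Set.not_nonempty_iff_eq_empty] at hne
    apply h
    funext ⟨m, hm⟩
    have : (m - 1).toNat ∉ {n : ℕ | y ⟨(n : ℤ) + 1, by omega⟩ ≠ z ⟨(n : ℤ) + 1, by omega⟩} := by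
      rw [hne]; simp
    simp only [ne_eq, mem_ofPred_eq, not_not] at this
    have e : (((m - 1).toNat : ℕ) : ℤ) + 1 = m := by omega
    simpa only [e] using this

/-- Position of the first disagreement of two distinct pasts. -/
lemma exists_distXm {p q : Xm ℓ} (h : p ≠ q) :
    ∃ n : ℕ, distXm p q = (1 / 2) ^ n ∧ (∀ k < n, past p k = past q k) := by
  refine ⟨_, (by unfold distXm; rw [if_neg h, zpow_neg_eq]), ?_⟩
  intro k hk
  have := Nat.notMem_of_lt_sInf hk
  simpa [past] using this

lemma distXp_le {y z : Xp ℓ} (n : ℕ)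
    (h : ∀ k < n, y ⟨(k : ℤ) + 1, by omega⟩ = z ⟨(k : ℤ) + 1, by omega⟩) :
    distXp y z ≤ (1 / 2) ^ n := by
  by_cases hyz : y = z
  · simp [distXp, hyz]
  obtain ⟨m, hm, -, hne⟩ := exists_distXp hyz
  rw [hm]
  refine pow_le_pow_of_le_one (by norm_num) (by norm_num) ?_
  by_contra! hlt
  exact hne (h m hlt)

lemma distXp_le_one (y z : Xp ℓ) : distXp y z ≤ 1 := by
  simpa using distXp_le (y := y) (z := z) 0 (by simp)

lemma distXm_le_one (p q : Xm ℓ) : distXm p q ≤ 1 := by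
  by_cases h : p = q
  · simp [distXm, h]
  obtain ⟨n, hn, -⟩ := exists_distXm h
  rw [hn]
  exact pow_le_one₀ (by norm_num) (by norm_num)

lemma distXp_consP_le (j : Fin ℓ) (y z : Xp ℓ) :
    distXp (consP j y) (consP j z) ≤ (1 / 2) * distXp y z := by
  by_cases h : y = z
  · simp [distXp, h]
  obtain ⟨n, hn, hag, -⟩ := exists_distXp h
  rw [hn, ← pow_succ']
  refine distXp_le _ fun k hk => ?_
  rcases k with _ | k
  · simp [consP]
  · have := hag k (by omega)
    have h0 : ¬ ((k : ℤ) + 1 = 0) := by omega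
    simpa [consP, h0] using this

lemma distXp_conc_le (p : Xm ℓ) (y z : Xp ℓ) (k : ℕ) :
    distXp (conc p y k) (conc p z k) ≤ (1 / 2) ^ k * distXp y z := by
  induction k with
  | zero =>
    have := distXp_consP_le (past p 0) y z
    have := distXp_nonneg y z
    simp only [conc, pow_zero, one_mul]
    linarith
  | succ k ih =>
    have := distXp_consP_le (past p (k + 1)) (conc p y k) (conc p z k)
    rw [conc, conc, pow_succ']
    linarith

/-- The distance on `X⁻ × X⁺` used to express Hölder continuity of the density. -/
def distMax (z w : Xm ℓ × Xp ℓ) : ℝ := max (distXm z.1 w.1) (distXp z.2 w.2)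

lemma distMax_nonneg (z w : Xm ℓ × Xp ℓ) : 0 ≤ distMax z w :=
  le_max_of_le_left (distXm_nonneg _ _)

lemma distMax_le_one (z w : Xm ℓ × Xp ℓ) : distMax z w ≤ 1 :=
  max_le (distXm_le_one _ _) (distXp_le_one _ _)

lemma distXp_conc_zero_le (z w : Xm ℓ × Xp ℓ) :
    distXp (conc z.1 z.2 0) (conc w.1 w.2 0) ≤ distMax z w := by
  by_cases h : past z.1 0 = past w.1 0
  · have h1 := distXp_conc_le w.1 z.2 w.2 0
    rw [conc_congr z.2 0 (q := w.1) (by simpa using h)]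
    rw [pow_zero, one_mul] at h1
    exact h1.trans (le_max_right _ _)
  · have hne : z.1 ≠ w.1 := fun e => h (by rw [e])
    obtain ⟨n, hn, hag⟩ := exists_distXm hne
    have : n = 0 := by
      by_contra h0
      exact h (hag 0 (by omega))
    subst this
    rw [pow_zero] at hn
    exact (distXp_le_one _ _).trans (hn ▸ le_max_left _ _)

lemma continuous_consP (j : Fin ℓ) : Continuous (consP j) := by
  refine continuous_pi fun m => ?_
  by_cases h : (m : ℤ) = 1
  · simp only [consP, h, dif_pos]; exact continuous_const
  · simp only [consP, h, dif_neg, not_false_eq_true]; exact continuous_apply _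

lemma continuous_conc (k : ℕ) : Continuous fun z : Xm ℓ × Xp ℓ => conc z.1 z.2 k := by
  have hc : Continuous fun a : Fin ℓ × Xp ℓ => consP a.1 a.2 :=
    continuous_prod_of_discrete_left.2 continuous_consP
  have hp (i : ℕ) : Continuous fun z : Xm ℓ × Xp ℓ => past z.1 i := by
    unfold past; fun_prop
  induction k with
  | zero => exact hc.comp ((hp 0).prodMk continuous_snd)
  | succ k ih => exact hc.comp ((hp (k + 1)).prodMk ih)

lemma eventually_distXp_le (y : Xp ℓ) (n : ℕ) :
    ∀ᶠ z in nhds y, distXp z y ≤ (1 / 2) ^ n := by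
  have : ∀ᶠ z in nhds y, ∀ k ∈ Finset.range n,
      z ⟨(k : ℤ) + 1, by omega⟩ = y ⟨(k : ℤ) + 1, by omega⟩ := by
    rw [Filter.eventually_all_finset]
    intro k _
    have hc : Continuous fun z : Xp ℓ => z ⟨(k : ℤ) + 1, by omega⟩ := continuous_apply _
    exact hc.continuousAt.eventually
      ((isOpen_discrete {y ⟨(k : ℤ) + 1, by omega⟩}).mem_nhds (by simp))
  filter_upwards [this] with z hz
  exact distXp_le n fun k hk => hz k (by simpa using hk)

lemma continuous_of_holder {f : Xp ℓ → ℝ} {β C : ℝ} (hβ : 0 < β)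
    (hf : ∀ x y, |f x - f y| ≤ C * distXp x y ^ β) : Continuous f := by
  rw [Metric.continuous_iff']
  intro y ε hε
  have hlim : Tendsto (fun n : ℕ => |C| * (((1 : ℝ) / 2) ^ n) ^ β) atTop (nhds 0) := by
    have h1 : Tendsto (fun n : ℕ => ((1 : ℝ) / 2) ^ n) atTop (nhds 0) :=
      tendsto_pow_atTop_nhds_zero_of_lt_one (by norm_num) (by norm_num)
    have h2 := (h1.rpow_const (p := β) (Or.inr hβ.le)).const_mul |C|
    simpa [Real.zero_rpow hβ.ne'] using h2
  obtain ⟨n, hn⟩ := (hlim.eventually_lt_const hε).exists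
  filter_upwards [eventually_distXp_le y n] with z hz
  rw [Real.dist_eq]
  calc |f z - f y| ≤ C * distXp z y ^ β := hf z y
    _ ≤ |C| * distXp z y ^ β :=
        mul_le_mul_of_nonneg_right (le_abs_self C) (Real.rpow_nonneg (distXp_nonneg _ _) _)
    _ ≤ |C| * (((1 : ℝ) / 2) ^ n) ^ β := by
        gcongr
        exact distXp_nonneg _ _
    _ < ε := hn

/-- The logarithm of a positive Hölder function on the compact space `X⁺` is Hölder. -/
lemma exists_log_holder (y₀ : Xp ℓ) {J : Xp ℓ → ℝ} {β C : ℝ} (hβ : 0 < β)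
    (hJpos : ∀ x, 0 < J x) (hJ : ∀ x y, |J x - J y| ≤ C * distXp x y ^ β) :
    ∃ K : ℝ, 0 ≤ K ∧ ∀ x y, |Real.log (J x) - Real.log (J y)| ≤ K * distXp x y ^ β := by
  obtain ⟨m, -, hm⟩ := isCompact_univ.exists_isMinOn ⟨y₀, Set.mem_univ _⟩
    (continuous_of_holder hβ hJ).continuousOn
  have hm' (x : Xp ℓ) : J m ≤ J x := hm (Set.mem_univ x)
  have key (x y : Xp ℓ) : Real.log (J x) - Real.log (J y) ≤ |C| / J m * distXp x y ^ β := by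
    have hd : 0 ≤ distXp x y ^ β := Real.rpow_nonneg (distXp_nonneg _ _) _
    rw [← Real.log_div (hJpos x).ne' (hJpos y).ne']
    have h1 := Real.log_le_sub_one_of_pos (div_pos (hJpos x) (hJpos y))
    have h2 : J x / J y - 1 = (J x - J y) / J y := by
      field_simp [(hJpos y).ne']
    have h3 : J x - J y ≤ |C| * distXp x y ^ β :=
      (le_abs_self _).trans ((hJ x y).trans (mul_le_mul_of_nonneg_right (le_abs_self C) hd))
    calc _ ≤ (J x - J y) / J y := h2 ▸ h1
      _ ≤ (|C| * distXp x y ^ β) / J y := by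
          gcongr
          exact (hJpos y).le
      _ ≤ (|C| * distXp x y ^ β) / J m := by
          gcongr
          · exact hJpos m
          · exact hm' y
      _ = _ := by ring
  refine ⟨|C| / J m, div_nonneg (abs_nonneg _) (hJpos m).le, fun x y => abs_le.2 ⟨?_, key x y⟩⟩
  have hsym : distXp y x = distXp x y := by
    unfold distXp
    simp only [eq_comm, ne_comm]
  have := key y x
  rw [hsym] at this
  linarith

/-! ### The limiting Birkhoff cocycle of the logarithm of the Jacobian -/

/-- The `k`-th contribution to the logarithm of the ratio of the conditional densities at the
futures `z.2` and `y₀`, for the past `z.1`. -/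
def cocycleTerm (L : Xp ℓ → ℝ) (y₀ : Xp ℓ) (k : ℕ) (z : Xm ℓ × Xp ℓ) : ℝ :=
  L (conc z.1 z.2 k) - L (conc z.1 y₀ k)

/-- The sum over the whole past of the differences of `L` along the backward orbits of the futures
`z.2` and `y₀`. -/
def cocycle (L : Xp ℓ → ℝ) (y₀ : Xp ℓ) (z : Xm ℓ × Xp ℓ) : ℝ := ∑' k, cocycleTerm L y₀ k z

section Cocycle

variable {L : Xp ℓ → ℝ} {K α : ℝ}

lemma half_rpow_lt_one (hα : 0 < α) : (1 / 2 : ℝ) ^ α < 1 :=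
  Real.rpow_lt_one (by norm_num) (by norm_num) hα

lemma half_pow_rpow (k : ℕ) : (((1 : ℝ) / 2) ^ k) ^ α = ((1 / 2 : ℝ) ^ α) ^ k := by
  rw [← Real.rpow_natCast, ← Real.rpow_natCast, ← Real.rpow_mul (by norm_num),
    ← Real.rpow_mul (by norm_num), mul_comm]

lemma summable_geom (hα : 0 < α) (c : ℝ) : Summable fun k : ℕ => c * ((1 / 2 : ℝ) ^ α) ^ k :=
  (summable_geometric_of_lt_one (by positivity) (half_rpow_lt_one hα)).mul_left c

lemma L_conc_sub_le (hK : 0 ≤ K) (hα : 0 < α)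
    (hL : ∀ x y, |L x - L y| ≤ K * distXp x y ^ (2 * α)) (p : Xm ℓ) (y z : Xp ℓ) (k : ℕ) :
    |L (conc p y k) - L (conc p z k)| ≤
      K * (((1 / 2 : ℝ) ^ α) ^ k * ((1 / 2 : ℝ) ^ α) ^ k * distXp y z ^ α) := by
  refine (hL _ _).trans (mul_le_mul_of_nonneg_left ?_ hK)
  have hd := distXp_nonneg y z
  have h1 : distXp (conc p y k) (conc p z k) ^ (2 * α) ≤
      ((1 / 2) ^ k * distXp y z) ^ (2 * α) :=
    Real.rpow_le_rpow (distXp_nonneg _ _) (distXp_conc_le p y z k) (by positivity)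
  refine h1.trans ?_
  rw [two_mul, Real.rpow_add_of_nonneg (by positivity) hα.le hα.le,
    Real.mul_rpow (by positivity) hd, half_pow_rpow]
  have h2 : distXp y z ^ α ≤ 1 := Real.rpow_le_one hd (distXp_le_one _ _) hα.le
  have h3 : 0 ≤ distXp y z ^ α := Real.rpow_nonneg hd _
  have h4 : distXp y z ^ α * distXp y z ^ α ≤ distXp y z ^ α := mul_le_of_le_one_left h3 h2
  calc _ = ((1 / 2 : ℝ) ^ α) ^ k * ((1 / 2 : ℝ) ^ α) ^ k *
        (distXp y z ^ α * distXp y z ^ α) := by ring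
    _ ≤ _ := mul_le_mul_of_nonneg_left h4 (by positivity)

lemma abs_cocycleTerm_le' (hK : 0 ≤ K) (hα : 0 < α)
    (hL : ∀ x y, |L x - L y| ≤ K * distXp x y ^ (2 * α)) (y₀ : Xp ℓ) (k : ℕ) (z : Xm ℓ × Xp ℓ) :
    |cocycleTerm L y₀ k z| ≤ K * (((1 / 2 : ℝ) ^ α) ^ k * ((1 / 2 : ℝ) ^ α) ^ k) := by
  refine (L_conc_sub_le hK hα hL z.1 z.2 y₀ k).trans (mul_le_mul_of_nonneg_left ?_ hK)
  exact mul_le_of_le_one_right (by positivity)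
    (Real.rpow_le_one (distXp_nonneg _ _) (distXp_le_one _ _) hα.le)

lemma abs_cocycleTerm_le (hK : 0 ≤ K) (hα : 0 < α)
    (hL : ∀ x y, |L x - L y| ≤ K * distXp x y ^ (2 * α)) (y₀ : Xp ℓ) (k : ℕ) (z : Xm ℓ × Xp ℓ) :
    |cocycleTerm L y₀ k z| ≤ K * ((1 / 2 : ℝ) ^ α) ^ k := by
  refine (abs_cocycleTerm_le' hK hα hL y₀ k z).trans (mul_le_mul_of_nonneg_left ?_ hK)
  exact mul_le_of_le_one_left (by positivity)
    (pow_le_one₀ (by positivity) (half_rpow_lt_one hα).le)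

/-- If the pasts agree up to position `-k`, the reference terms cancel and the contraction of the
inverse branches applies; otherwise `2⁻ᵏ` is at most the distance of the pasts. Halving the Hölder
exponent leaves a summable factor in both cases. -/
lemma abs_cocycleTerm_sub_le (hK : 0 ≤ K) (hα : 0 < α)
    (hL : ∀ x y, |L x - L y| ≤ K * distXp x y ^ (2 * α)) (y₀ : Xp ℓ) (k : ℕ)
    (z w : Xm ℓ × Xp ℓ) :
    |cocycleTerm L y₀ k z - cocycleTerm L y₀ k w| ≤
      2 * K * ((1 / 2 : ℝ) ^ α) ^ k * distMax z w ^ α := by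
  set r := ((1 / 2 : ℝ) ^ α) ^ k with hr
  have hr0 : 0 ≤ r := by positivity
  have hr1 : r ≤ 1 := pow_le_one₀ (by positivity) (half_rpow_lt_one hα).le
  have hD : 0 ≤ distMax z w ^ α := Real.rpow_nonneg (distMax_nonneg _ _) _
  by_cases h : ∀ i ≤ k, past z.1 i = past w.1 i
  · have h1 := L_conc_sub_le hK hα hL w.1 z.2 w.2 k
    have e : cocycleTerm L y₀ k z - cocycleTerm L y₀ k w =
        L (conc w.1 z.2 k) - L (conc w.1 w.2 k) := by
      simp only [cocycleTerm, conc_congr _ k h]; ring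
    rw [e]
    refine h1.trans ?_
    rw [← hr]
    have h2 : distXp z.2 w.2 ^ α ≤ distMax z w ^ α :=
      Real.rpow_le_rpow (distXp_nonneg _ _) (le_max_right _ _) hα.le
    have h4 : r * r * distXp z.2 w.2 ^ α ≤ r * distMax z w ^ α :=
      mul_le_mul (mul_le_of_le_one_left hr0 hr1) h2
        (Real.rpow_nonneg (distXp_nonneg _ _) _) hr0
    calc _ ≤ K * (r * distMax z w ^ α) := mul_le_mul_of_nonneg_left h4 hK
      _ ≤ _ := by nlinarith [mul_nonneg hK (mul_nonneg hr0 hD)]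
  · push Not at h
    obtain ⟨i, hik, hi⟩ := h
    have hne : z.1 ≠ w.1 := fun e => hi (by rw [e])
    obtain ⟨n, hn, hag⟩ := exists_distXm hne
    have hni : n ≤ i := by
      by_contra! hlt
      exact hi (hag i hlt)
    have h2 : r ≤ distMax z w ^ α := by
      rw [hr, ← half_pow_rpow]
      refine Real.rpow_le_rpow (by positivity) (le_trans ?_ (le_max_left _ _)) hα.le
      rw [hn]
      exact pow_le_pow_of_le_one (by norm_num) (by norm_num) (by omega)
    have h3 := abs_cocycleTerm_le' hK hα hL y₀ k z
    have h4 := abs_cocycleTerm_le' hK hα hL y₀ k w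
    rw [← hr] at h3 h4
    have h5 : K * (r * r) ≤ K * (r * distMax z w ^ α) := by gcongr
    calc _ ≤ |cocycleTerm L y₀ k z| + |cocycleTerm L y₀ k w| := abs_sub _ _
      _ ≤ _ := by linarith

lemma summable_cocycleTerm (hK : 0 ≤ K) (hα : 0 < α)
    (hL : ∀ x y, |L x - L y| ≤ K * distXp x y ^ (2 * α)) (y₀ : Xp ℓ) (z : Xm ℓ × Xp ℓ) :
    Summable fun k => cocycleTerm L y₀ k z :=
  Summable.of_norm_bounded (summable_geom hα K) fun k => abs_cocycleTerm_le hK hα hL y₀ k z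

lemma continuous_cocycle (hK : 0 ≤ K) (hα : 0 < α)
    (hL : ∀ x y, |L x - L y| ≤ K * distXp x y ^ (2 * α)) (y₀ : Xp ℓ) :
    Continuous (cocycle L y₀) := by
  have hLc : Continuous L := continuous_of_holder (by positivity) hL
  refine continuous_tsum (fun k => ?_) (summable_geom hα K)
    fun k z => abs_cocycleTerm_le hK hα hL y₀ k z
  exact (hLc.comp (continuous_conc k)).sub
    (hLc.comp ((continuous_conc k).comp (continuous_fst.prodMk continuous_const)))

lemma exists_cocycle_holder (hK : 0 ≤ K) (hα : 0 < α)
    (hL : ∀ x y, |L x - L y| ≤ K * distXp x y ^ (2 * α)) (y₀ : Xp ℓ) :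
    ∃ C : ℝ, 0 ≤ C ∧ ∀ z w, |cocycle L y₀ z - cocycle L y₀ w| ≤ C * distMax z w ^ α := by
  refine ⟨∑' k : ℕ, 2 * K * ((1 / 2 : ℝ) ^ α) ^ k, tsum_nonneg fun k => by positivity,
    fun z w => ?_⟩
  unfold cocycle
  rw [← (summable_cocycleTerm hK hα hL y₀ z).tsum_sub (summable_cocycleTerm hK hα hL y₀ w)]
  have := tsum_of_norm_bounded (f := fun k => cocycleTerm L y₀ k z - cocycleTerm L y₀ k w) (((summable_geom hα (2 * K)).mul_right (distMax z w ^ α)).hasSum)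
    fun k => abs_cocycleTerm_sub_le hK hα hL y₀ k z w
  rwa [tsum_mul_right] at this

lemma exists_cocycle_tail (hK : 0 ≤ K) (hα : 0 < α)
    (hL : ∀ x y, |L x - L y| ≤ K * distXp x y ^ (2 * α)) (y₀ : Xp ℓ) :
    ∃ ε : ℕ → ℝ, Tendsto ε atTop (nhds 0) ∧ ∀ n z,
      |cocycle L y₀ z - ∑ k ∈ Finset.range n, cocycleTerm L y₀ k z| ≤ ε n := by
  refine ⟨fun n => ∑' k : ℕ, K * ((1 / 2 : ℝ) ^ α) ^ (k + n),
    tendsto_sum_nat_add fun k : ℕ => K * ((1 / 2 : ℝ) ^ α) ^ k, fun n z => ?_⟩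
  have h := (summable_cocycleTerm hK hα hL y₀ z).sum_add_tsum_nat_add n
  rw [cocycle, ← h, add_sub_cancel_left]
  exact tsum_of_norm_bounded (f := fun k => cocycleTerm L y₀ (k + n) z) ((summable_nat_add_iff n).2 (summable_geom hα K)).hasSum
    fun k => abs_cocycleTerm_le hK hα hL y₀ (k + n) z

end Cocycle

/-! ### The normalized density -/

/-- The total mass of the unnormalized conditional density `exp (-cocycle)` on the future, given
the past `p`. -/
def normalizer (L : Xp ℓ → ℝ) (y₀ : Xp ℓ) (ν : Measure (Xp ℓ)) (p : Xm ℓ) : ℝ :=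
  ∫ y, Real.exp (-cocycle L y₀ (p, y)) ∂ν

/-- The density of the law of `(past, future)` with respect to the product of its marginals. -/
def kap (L : Xp ℓ → ℝ) (y₀ : Xp ℓ) (ν : Measure (Xp ℓ)) (z : Xm ℓ × Xp ℓ) : ℝ :=
  Real.exp (-cocycle L y₀ z) / normalizer L y₀ ν z.1

section Density

variable {L : Xp ℓ → ℝ} {K α : ℝ} {y₀ : Xp ℓ} {ν : Measure (Xp ℓ)} [IsProbabilityMeasure ν]

lemma integrable_exp (hc : Continuous (cocycle L y₀)) (p : Xm ℓ) :
    Integrable (fun y => Real.exp (-cocycle L y₀ (p, y))) ν := by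
  have : Continuous fun y => Real.exp (-cocycle L y₀ (p, y)) := by fun_prop
  exact this.integrable_of_hasCompactSupport (HasCompactSupport.of_compactSpace _)

lemma normalizer_pos (hc : Continuous (cocycle L y₀)) (p : Xm ℓ) : 0 < normalizer L y₀ ν p :=
  integral_exp_pos (integrable_exp hc p)

lemma measurable_normalizer (hc : Continuous (cocycle L y₀)) :
    Measurable (normalizer L y₀ ν) := by
  have : Continuous fun z : Xm ℓ × Xp ℓ => Real.exp (-cocycle L y₀ z) := by fun_prop
  exact (this.measurable.stronglyMeasurable.integral_prod_right' (ν := ν)).measurable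

lemma measurable_kap (hc : Continuous (cocycle L y₀)) : Measurable (kap L y₀ ν) := by
  have : Continuous fun z : Xm ℓ × Xp ℓ => Real.exp (-cocycle L y₀ z) := by fun_prop
  exact this.measurable.div ((measurable_normalizer hc).comp measurable_fst)

lemma distMax_same_le (z w : Xm ℓ × Xp ℓ) (y : Xp ℓ) :
    distMax (z.1, y) (w.1, y) ≤ distMax z w := by
  refine max_le (le_max_left _ _) ?_
  have : distXp y y = 0 := by simp [distXp]
  simp only [this]
  exact distMax_nonneg _ _

lemma log_normalizer_sub_le (hc : Continuous (cocycle L y₀)) (hα : 0 < α) {C : ℝ} (hC : 0 ≤ C)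
    (h : ∀ z w, |cocycle L y₀ z - cocycle L y₀ w| ≤ C * distMax z w ^ α) (z w : Xm ℓ × Xp ℓ) :
    Real.log (normalizer L y₀ ν z.1) - Real.log (normalizer L y₀ ν w.1) ≤
      C * distMax z w ^ α := by
  have hN : normalizer L y₀ ν z.1 ≤ Real.exp (C * distMax z w ^ α) * normalizer L y₀ ν w.1 := by
    unfold normalizer
    rw [← integral_const_mul]
    refine integral_mono (integrable_exp hc _) ((integrable_exp hc _).const_mul _) fun y => ?_
    simp only
    rw [← Real.exp_add, Real.exp_le_exp]
    have h1 := (abs_le.1 (h (z.1, y) (w.1, y))).1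
    have h2 : C * distMax (z.1, y) (w.1, y) ^ α ≤ C * distMax z w ^ α :=
      mul_le_mul_of_nonneg_left
        (Real.rpow_le_rpow (distMax_nonneg _ _) (distMax_same_le z w y) hα.le) hC
    linarith
  have h3 := Real.log_le_log (normalizer_pos hc _) hN
  rw [Real.log_mul (Real.exp_pos _).ne' (normalizer_pos hc _).ne', Real.log_exp] at h3
  linarith

lemma distMax_comm (z w : Xm ℓ × Xp ℓ) : distMax z w = distMax w z := by
  unfold distMax distXm distXp
  simp only [eq_comm, ne_comm]

lemma abs_log_normalizer_sub_le (hc : Continuous (cocycle L y₀)) (hα : 0 < α) {C : ℝ}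
    (hC : 0 ≤ C) (h : ∀ z w, |cocycle L y₀ z - cocycle L y₀ w| ≤ C * distMax z w ^ α)
    (z w : Xm ℓ × Xp ℓ) :
    |Real.log (normalizer L y₀ ν z.1) - Real.log (normalizer L y₀ ν w.1)| ≤
      C * distMax z w ^ α := by
  have h1 := log_normalizer_sub_le (ν := ν) hc hα hC h z w
  have h2 := log_normalizer_sub_le (ν := ν) hc hα hC h w z
  rw [distMax_comm w z] at h2
  exact abs_le.2 ⟨by linarith, h1⟩

lemma exp_sub_exp_le (a b : ℝ) : Real.exp a - Real.exp b ≤ Real.exp a * (a - b) := by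
  have h1 := Real.add_one_le_exp (b - a)
  have h2 : Real.exp b = Real.exp a * Real.exp (b - a) := by rw [← Real.exp_add]; ring_nf
  rw [h2]
  nlinarith [Real.exp_pos a]

/-- The exponential of a Hölder function on the bounded space `X⁻ × X⁺` is Hölder. -/
lemma exists_exp_holder {R : Xm ℓ × Xp ℓ → ℝ} (hα : 0 < α) {C : ℝ} (hC : 0 ≤ C)
    (h : ∀ z w, |R z - R w| ≤ C * distMax z w ^ α) (z₀ : Xm ℓ × Xp ℓ) :
    ∃ C' : ℝ, ∀ z w, |Real.exp (R z) - Real.exp (R w)| ≤ C' * distMax z w ^ α := by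
  have hb (z : Xm ℓ × Xp ℓ) : R z ≤ R z₀ + C := by
    have h1 := (abs_le.1 (h z z₀)).2
    have h2 : distMax z z₀ ^ α ≤ 1 :=
      Real.rpow_le_one (distMax_nonneg _ _) (distMax_le_one _ _) hα.le
    nlinarith
  have key (z w : Xm ℓ × Xp ℓ) :
      Real.exp (R z) - Real.exp (R w) ≤ Real.exp (R z₀ + C) * C * distMax z w ^ α := by
    calc _ ≤ Real.exp (R z) * (R z - R w) := exp_sub_exp_le _ _
      _ ≤ Real.exp (R z) * |R z - R w| :=
          mul_le_mul_of_nonneg_left (le_abs_self _) (Real.exp_pos _).le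
      _ ≤ Real.exp (R z₀ + C) * |R z - R w| :=
          mul_le_mul_of_nonneg_right (Real.exp_le_exp.2 (hb z)) (abs_nonneg _)
      _ ≤ Real.exp (R z₀ + C) * (C * distMax z w ^ α) :=
          mul_le_mul_of_nonneg_left (h z w) (Real.exp_pos _).le
      _ = _ := by ring
  refine ⟨_, fun z w => abs_le.2 ⟨?_, key z w⟩⟩
  have := key w z
  rw [distMax_comm w z] at this
  linarith

/-- The density of the local product structure, `kap · J`, is Hölder. The factor `J = exp L`
converts `P₊ μ` into the marginal on the future of the restriction of `μ` to a cylinder. -/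
lemma exists_density_holder (hK : 0 ≤ K) (hα : 0 < α)
    (hL : ∀ x y, |L x - L y| ≤ K * distXp x y ^ (2 * α)) (z₀ : Xm ℓ × Xp ℓ) :
    ∃ C : ℝ, ∀ z w,
      |kap L y₀ ν z * Real.exp (L (conc z.1 z.2 0)) -
        kap L y₀ ν w * Real.exp (L (conc w.1 w.2 0))| ≤ C * distMax z w ^ α := by
  have hc := continuous_cocycle hK hα hL y₀
  obtain ⟨C, hC, hS⟩ := exists_cocycle_holder hK hα hL y₀
  have hL0 (z w : Xm ℓ × Xp ℓ) :
      |L (conc z.1 z.2 0) - L (conc w.1 w.2 0)| ≤ K * distMax z w ^ α := by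
    refine (hL _ _).trans (mul_le_mul_of_nonneg_left ?_ hK)
    have h0 := distMax_nonneg z w
    have h1 : distMax z w ^ α ≤ 1 := Real.rpow_le_one h0 (distMax_le_one _ _) hα.le
    calc _ ≤ distMax z w ^ (2 * α) :=
          Real.rpow_le_rpow (distXp_nonneg _ _) (distXp_conc_zero_le z w) (by positivity)
      _ = distMax z w ^ α * distMax z w ^ α := by
          rw [two_mul, Real.rpow_add_of_nonneg h0 hα.le hα.le]
      _ ≤ _ := mul_le_of_le_one_left (Real.rpow_nonneg h0 _) h1
  let R (z : Xm ℓ × Xp ℓ) : ℝ :=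
    -cocycle L y₀ z - Real.log (normalizer L y₀ ν z.1) + L (conc z.1 z.2 0)
  have hR (z : Xm ℓ × Xp ℓ) :
      kap L y₀ ν z * Real.exp (L (conc z.1 z.2 0)) = Real.exp (R z) := by
    simp only [R, kap]
    rw [Real.exp_add, Real.exp_sub, Real.exp_log (normalizer_pos hc _)]
  obtain ⟨C', hC'⟩ := exists_exp_holder (R := R) hα (C := C + C + K) (by positivity)
    (fun z w => by
      have h1 := abs_le.1 (hS z w)
      have h2 := abs_le.1 (abs_log_normalizer_sub_le (ν := ν) hc hα hC hS z w)
      have h3 := abs_le.1 (hL0 z w)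
      simp only [R]
      exact abs_le.2 ⟨by linarith, by linarith⟩) z₀
  refine ⟨C', fun z w => ?_⟩
  rw [hR, hR]
  exact hC' z w

end Density

/-! ### Measures of cylinders -/

/-- The cylinder of pasts agreeing with `p` on the positions `-n, …, 0`. -/
def cylM (n : ℕ) (p : Xm ℓ) : Set (Xm ℓ) := {q | ∀ k ≤ n, past q k = past p k}

/-- The set of futures which start with the word `p₋ₙ … p₀`. -/
def fwd (p : Xm ℓ) : ℕ → Set (Xp ℓ)
  | 0 => cylP (past p 0)
  | n + 1 => cylP (past p (n + 1)) ∩ shiftP ⁻¹' fwd p n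

lemma measurable_shiftP : Measurable (shiftP : Xp ℓ → Xp ℓ) :=
  measurable_pi_lambda _ fun _ => measurable_pi_apply _

lemma measurable_Pp : Measurable (Pp : XX ℓ → Xp ℓ) :=
  measurable_pi_lambda _ fun _ => measurable_pi_apply _

lemma measurable_Pm : Measurable (Pm : XX ℓ → Xm ℓ) :=
  measurable_pi_lambda _ fun _ => measurable_pi_apply _

lemma measurable_past (k : ℕ) : Measurable fun p : Xm ℓ => past p k := measurable_pi_apply _

lemma measurableSet_cylP (j : Fin ℓ) : MeasurableSet (cylP j : Set (Xp ℓ)) :=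
  (measurable_pi_apply (⟨1, by norm_num⟩ : {n : ℤ // 0 < n}) :
    Measurable fun x : Xp ℓ => x ⟨1, by norm_num⟩) (measurableSet_singleton j)

lemma measurableSet_cyl (j : Fin ℓ) : MeasurableSet (cyl j : Set (XX ℓ)) :=
  (measurable_pi_apply (0 : ℤ) : Measurable fun x : XX ℓ => x 0) (measurableSet_singleton j)

lemma measurableSet_cylM (n : ℕ) (p : Xm ℓ) : MeasurableSet (cylM n p) := by
  have : cylM n p = ⋂ k, ⋂ (_ : k ≤ n), (fun q => past q k) ⁻¹' {past p k} := by
    ext q; simp [cylM]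
  rw [this]
  exact MeasurableSet.iInter fun k => MeasurableSet.iInter fun _ =>
    measurable_past k (measurableSet_singleton _)

lemma measurableSet_fwd (p : Xm ℓ) (n : ℕ) : MeasurableSet (fwd p n) := by
  induction n with
  | zero => exact measurableSet_cylP _
  | succ n ih => exact (measurableSet_cylP _).inter (measurable_shiftP ih)

lemma conc_of_mem_fwd (p : Xm ℓ) (n : ℕ) {z : Xp ℓ} (hz : z ∈ fwd p n) :
    conc p (shiftP^[n + 1] z) n = z := by
  induction n generalizing z with
  | zero => exact consP_shiftP hz
  | succ n ih =>
    rw [conc, Function.iterate_succ_apply, ih hz.2, consP_shiftP hz.1]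

lemma iterate_shiftT (n : ℕ) (x : XX ℓ) (i : ℤ) : shiftT^[n] x i = x (i + n) := by
  induction n generalizing x with
  | zero => simp
  | succ n ih =>
    rw [Function.iterate_succ_apply, ih, shiftT]
    push_cast
    ring_nf

lemma shiftP_iterate_Pp (n : ℕ) (x : XX ℓ) : shiftP^[n] (Pp x) = Pp (shiftT^[n] x) := by
  induction n generalizing x with
  | zero => rfl
  | succ n ih => exact ih (shiftT x)

lemma Pp_mem_fwd (p : Xm ℓ) (n : ℕ) (x : XX ℓ) :
    Pp x ∈ fwd p n ↔ Pm (shiftT^[n + 1] x) ∈ cylM n p := by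
  have hpast (m k : ℕ) (y : XX ℓ) : past (Pm (shiftT^[m] y)) k = y (-(k : ℤ) + m) :=
    iterate_shiftT m y _
  simp only [cylM, mem_ofPred_eq, hpast]
  induction n generalizing x with
  | zero =>
    constructor
    · intro h k hk
      obtain rfl : k = 0 := by omega
      exact h
    · intro h
      exact h 0 le_rfl
  | succ n ih =>
    have h1 : Pp x ∈ fwd p (n + 1) ↔ x 1 = past p (n + 1) ∧ Pp (shiftT x) ∈ fwd p n := Iff.rfl
    refine (h1.trans (and_congr_right' (ih (shiftT x)))).trans ?_
    have h2 (k : ℕ) : shiftT x (-(k : ℤ) + ((n + 1 : ℕ) : ℤ)) =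
        x (-(k : ℤ) + ((n + 1 + 1 : ℕ) : ℤ)) := by
      simp only [shiftT]; push_cast; ring_nf
    simp only [h2]
    constructor
    · rintro ⟨h0, h⟩ k hk
      rcases Nat.lt_or_ge k (n + 1) with hlt | hge
      · exact h k (by omega)
      · obtain rfl : k = n + 1 := by omega
        rw [← h0]; congr 1; push_cast; ring
    · intro h
      refine ⟨?_, fun k hk => h k (by omega)⟩
      rw [← h (n + 1) le_rfl]; congr 1; push_cast; ring

/-- The unnormalized conditional density of the future given the word `p₋ₙ … p₀`: the reciprocal
of the Jacobian of the `n + 1`-st iterate of the one-sided shift. -/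
def branchWeight (L : Xp ℓ → ℝ) (n : ℕ) (p : Xm ℓ) (y : Xp ℓ) : ENNReal :=
  ENNReal.ofReal (Real.exp (-∑ k ∈ Finset.range (n + 1), L (conc p y k)))

section Cylinders

variable {L : Xp ℓ → ℝ} {ν : Measure (Xp ℓ)}

lemma measurable_branchWeight (hL : Continuous L) (n : ℕ) (p : Xm ℓ) :
    Measurable (branchWeight L n p) := by
  have (k : ℕ) : Continuous fun y => conc p y k :=
    (continuous_conc k).comp (continuous_const.prodMk continuous_id)
  have : Continuous fun y => Real.exp (-∑ k ∈ Finset.range (n + 1), L (conc p y k)) := by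
    fun_prop
  exact this.measurable.ennreal_ofReal

/-- The Jacobian property in the form of the transfer operator of one inverse branch. -/
lemma lintegral_cylP (hL : Continuous L)
    (hJac : ∀ i : Fin ℓ, ∀ E : Set (Xp ℓ), MeasurableSet E → E ⊆ cylP i →
      ν (shiftP '' E) = ∫⁻ x in E, ENNReal.ofReal (Real.exp (L x)) ∂ν)
    (j : Fin ℓ) (F : Xp ℓ → ENNReal) (hF : Measurable F) :
    ∫⁻ z in cylP j, F (shiftP z) ∂ν =
      ∫⁻ y, F y * ENNReal.ofReal (Real.exp (-L (consP j y))) ∂ν := by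
  have hm : Measurable fun x => ENNReal.ofReal (Real.exp (L x)) :=
    (Real.continuous_exp.comp hL).measurable.ennreal_ofReal
  have hg : Measurable fun y => ENNReal.ofReal (Real.exp (-L (consP j y))) := by
    have : Continuous fun y => Real.exp (-L (consP j y)) := by
      have := continuous_consP j
      fun_prop
    exact this.measurable.ennreal_ofReal
  have hν : ν = (((ν.restrict (cylP j)).withDensity
      fun x => ENNReal.ofReal (Real.exp (L x))).map shiftP) := by
    ext B hB
    have himg : shiftP '' (cylP j ∩ shiftP ⁻¹' B) = B := by
      ext y
      constructor
      · rintro ⟨z, hz, rfl⟩; exact hz.2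
      · intro hy
        exact ⟨consP j y, ⟨consP_mem j y, by rwa [mem_preimage, shiftP_consP]⟩, shiftP_consP j y⟩
    have h := hJac j (cylP j ∩ shiftP ⁻¹' B)
      ((measurableSet_cylP j).inter (measurable_shiftP hB)) inter_subset_left
    rw [himg] at h
    rw [Measure.map_apply measurable_shiftP hB, withDensity_apply _ (measurable_shiftP hB),
      Measure.restrict_restrict (measurable_shiftP hB), h, inter_comm]
  conv_rhs => rw [hν]
  have hcomp : Measurable fun z =>
      F (shiftP z) * ENNReal.ofReal (Real.exp (-L (consP j (shiftP z)))) :=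
    (hF.fun_mul hg).comp measurable_shiftP
  rw [lintegral_map (hF.fun_mul hg) measurable_shiftP,
    lintegral_withDensity_eq_lintegral_mul _ hm hcomp]
  refine setLIntegral_congr_fun (measurableSet_cylP j) fun z hz => ?_
  simp only [Pi.mul_apply, consP_shiftP hz]
  rw [mul_left_comm, ← ENNReal.ofReal_mul (Real.exp_pos _).le, ← Real.exp_add]
  simp

lemma lintegral_fwd (hL : Continuous L)
    (hJac : ∀ i : Fin ℓ, ∀ E : Set (Xp ℓ), MeasurableSet E → E ⊆ cylP i →
      ν (shiftP '' E) = ∫⁻ x in E, ENNReal.ofReal (Real.exp (L x)) ∂ν)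
    (p : Xm ℓ) (n : ℕ) (F : Xp ℓ → ENNReal) (hF : Measurable F) :
    ∫⁻ z in fwd p n, F (shiftP^[n + 1] z) ∂ν = ∫⁻ y, F y * branchWeight L n p y ∂ν := by
  induction n generalizing F with
  | zero => simpa [fwd, branchWeight, conc] using lintegral_cylP hL hJac (past p 0) F hF
  | succ n ih =>
    have hg : Measurable fun y => ENNReal.ofReal (Real.exp (-L (conc p y (n + 1)))) := by
      have hcc : Continuous fun y => conc p y (n + 1) :=
        (continuous_conc (n + 1)).comp (continuous_const.prodMk continuous_id)
      have : Continuous fun y => Real.exp (-L (conc p y (n + 1))) := by fun_prop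
      exact this.measurable.ennreal_ofReal
    have hit : Measurable fun z : Xp ℓ => F (shiftP^[n + 1] z) :=
      hF.comp (measurable_shiftP.iterate _)
    have h1 : ∫⁻ z in fwd p (n + 1), F (shiftP^[n + 1 + 1] z) ∂ν =
        ∫⁻ z in cylP (past p (n + 1)),
          (fwd p n).indicator (fun w => F (shiftP^[n + 1] w)) (shiftP z) ∂ν := by
      rw [fwd, inter_comm, ← Measure.restrict_restrict (measurable_shiftP (measurableSet_fwd p n)),
        ← lintegral_indicator (measurable_shiftP (measurableSet_fwd p n))]
      rfl
    rw [h1, lintegral_cylP hL hJac _ _ (hit.indicator (measurableSet_fwd p n))]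
    have h2 : ∀ y, (fwd p n).indicator (fun w => F (shiftP^[n + 1] w)) y *
          ENNReal.ofReal (Real.exp (-L (consP (past p (n + 1)) y))) =
        (fwd p n).indicator (fun w => F (shiftP^[n + 1] w) *
          ENNReal.ofReal (Real.exp (-L (conc p (shiftP^[n + 1] w) (n + 1))))) y := by
      intro y
      by_cases hy : y ∈ fwd p n
      · simp only [indicator_of_mem hy, conc, conc_of_mem_fwd p n hy]
      · simp only [indicator_of_notMem hy, zero_mul]
    simp only [h2]
    rw [lintegral_indicator (measurableSet_fwd p n), ih _ (hF.fun_mul hg)]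
    refine lintegral_congr fun y => ?_
    rw [mul_assoc, branchWeight, branchWeight, ← ENNReal.ofReal_mul (Real.exp_pos _).le,
      ← Real.exp_add, Finset.sum_range_succ _ (n + 1)]
    congr 3
    ring

/-- The law of `(past, future)` on the product of a cylinder and a measurable set. -/
lemma map_cylM_prod {μ : Measure (XX ℓ)} (hinv : MeasurePreserving (shiftT : XX ℓ → XX ℓ) μ μ)
    (hL : Continuous L)
    (hJac : ∀ i : Fin ℓ, ∀ E : Set (Xp ℓ), MeasurableSet E → E ⊆ cylP i →
      (μ.map Pp) (shiftP '' E) = ∫⁻ x in E, ENNReal.ofReal (Real.exp (L x)) ∂(μ.map Pp))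
    (p : Xm ℓ) (n : ℕ) {B : Set (Xp ℓ)} (hB : MeasurableSet B) :
    (μ.map fun x => (Pm x, Pp x)) (cylM n p ×ˢ B) =
      ∫⁻ y in B, branchWeight L n p y ∂(μ.map Pp) := by
  have hS : MeasurableSet (shiftP^[n + 1] ⁻¹' B) := measurable_shiftP.iterate _ hB
  have h := lintegral_fwd hL hJac p n (B.indicator 1) (measurable_one.indicator hB)
  have h1 : ∫⁻ z in fwd p n, B.indicator 1 (shiftP^[n + 1] z) ∂(μ.map Pp) =
      (μ.map Pp) (shiftP^[n + 1] ⁻¹' B ∩ fwd p n) := by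
    rw [← Measure.restrict_apply hS, ← lintegral_indicator_one hS]
    rfl
  have h2 : ∫⁻ y, B.indicator 1 y * branchWeight L n p y ∂(μ.map Pp) =
      ∫⁻ y in B, branchWeight L n p y ∂(μ.map Pp) := by
    rw [← lintegral_indicator hB]
    refine lintegral_congr fun y => ?_
    by_cases hy : y ∈ B <;> simp [hy]
  rw [← h2, ← h, h1, Measure.map_apply measurable_Pp (hS.inter (measurableSet_fwd p n)),
    Measure.map_apply (measurable_Pm.prodMk measurable_Pp) ((measurableSet_cylM n p).prod hB),
    ← (hinv.iterate (n + 1)).measure_preimage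
      (measurable_Pm.prodMk measurable_Pp ((measurableSet_cylM n p).prod hB)).nullMeasurableSet]
  congr 1
  ext x
  simp only [mem_preimage, mem_prod, mem_inter_iff, Pp_mem_fwd, shiftP_iterate_Pp]
  exact and_comm

end Cylinders

/-! ### Comparison of the two measures -/

/-- If `η` is dominated by `θ` on all products `cylM m p ×ˢ B`, up to factors which tend to `1`
with the depth `m`, then it is dominated by `θ` on all products `A ×ˢ B` for which `A` depends on
finitely many positions: split `A` into cylinders of arbitrarily large depth. -/
lemma le_of_cylM_le {η θ : Measure (Xm ℓ × Xp ℓ)} {c : ℕ → ENNReal}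
    (hc : Tendsto c atTop (nhds 1)) {B : Set (Xp ℓ)}
    (h : ∀ n p, η (cylM n p ×ˢ B) ≤ c n * θ (cylM n p ×ˢ B))
    {A : Set (Xm ℓ)} (n : ℕ)
    (hsat : ∀ p ∈ A, cylM n p ⊆ A) : η (A ×ˢ B) ≤ θ (A ×ˢ B) := by
  have key (m : ℕ) (hm : n ≤ m) : η (A ×ˢ B) ≤ c m * θ (A ×ˢ B) := by
    let f : Xm ℓ × Xp ℓ → (Fin (m + 1) → Fin ℓ) := fun z k => past z.1 k
    have hf : Measurable f :=
      measurable_pi_lambda _ fun k => (measurable_past _).comp measurable_fst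
    have hsum (τ : Measure (Xm ℓ × Xp ℓ)) :
        τ (A ×ˢ B) = ∑ w : Fin (m + 1) → Fin ℓ, τ (f ⁻¹' {w} ∩ A ×ˢ B) := by
      have := MeasureTheory.sum_measure_preimage_singleton (μ := τ.restrict (A ×ˢ B)) (f := f)
        Finset.univ (fun w _ => hf (measurableSet_singleton w))
      rw [Finset.coe_univ, preimage_univ, Measure.restrict_apply_univ] at this
      rw [← this]
      exact Finset.sum_congr rfl fun w _ =>
        Measure.restrict_apply (hf (measurableSet_singleton w))
    rw [hsum η, hsum θ, Finset.mul_sum]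
    refine Finset.sum_le_sum fun w _ => ?_
    by_cases hw : ∃ p ∈ A, ∀ k : Fin (m + 1), past p k = w k
    · obtain ⟨p, hpA, hp⟩ := hw
      have e : f ⁻¹' {w} ∩ A ×ˢ B = cylM m p ×ˢ B := by
        ext ⟨q, y⟩
        simp only [f, mem_inter_iff, mem_preimage, mem_singleton_iff, mem_prod]
        constructor
        · rintro ⟨hq, -, hy⟩
          refine ⟨fun k hk => ?_, hy⟩
          have := congrFun hq ⟨k, by omega⟩
          exact this.trans (hp ⟨k, by omega⟩).symm
        · rintro ⟨hq, hy⟩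
          refine ⟨?_, hsat p hpA fun k hk => hq k (by omega), hy⟩
          funext k
          exact (hq k (by omega)).trans (hp k)
      rw [e]
      exact h m p
    · have e : f ⁻¹' {w} ∩ A ×ˢ B = ∅ := by
        ext ⟨q, y⟩
        simp only [f, mem_inter_iff, mem_preimage, mem_singleton_iff, mem_prod,
          mem_empty_iff_false, iff_false]
        rintro ⟨hq, hqA, -⟩
        exact hw ⟨q, hqA, fun k => congrFun hq k⟩
      simp [e]
  have hlim : Tendsto (fun m => c m * θ (A ×ˢ B)) atTop (nhds (1 * θ (A ×ˢ B))) :=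
    ENNReal.Tendsto.mul_const hc (Or.inl one_ne_zero)
  rw [one_mul] at hlim
  exact ge_of_tendsto hlim ((eventually_ge_atTop n).mono key)

lemma eq_of_cylM_le {η θ : Measure (Xm ℓ × Xp ℓ)} [IsFiniteMeasure η] {c : ℕ → ENNReal}
    (hc : Tendsto c atTop (nhds 1))
    (h₁ : ∀ n p (B : Set (Xp ℓ)), MeasurableSet B →
      η (cylM n p ×ˢ B) ≤ c n * θ (cylM n p ×ˢ B))
    (h₂ : ∀ n p (B : Set (Xp ℓ)), MeasurableSet B →
      θ (cylM n p ×ˢ B) ≤ c n * η (cylM n p ×ˢ B)) : η = θ := by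
  have key {A : Set (Xm ℓ)} (n : ℕ) (hsat : ∀ p ∈ A, cylM n p ⊆ A)
      {B : Set (Xp ℓ)} (hB : MeasurableSet B) : η (A ×ˢ B) = θ (A ×ˢ B) :=
    le_antisymm (le_of_cylM_le hc (fun n p => h₁ n p B hB) n hsat)
      (le_of_cylM_le hc (fun n p => h₂ n p B hB) n hsat)
  refine Measure.ext_prod fun {A B} hA hB => ?_
  have hrect (τ : Measure (Xm ℓ × Xp ℓ)) {A : Set (Xm ℓ)} (hA : MeasurableSet A) :
      τ (A ×ˢ B) = (τ.restrict (univ ×ˢ B)).map Prod.fst A := by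
    rw [Measure.map_apply measurable_fst hA, Measure.restrict_apply (measurable_fst hA)]
    congr 1
    ext ⟨q, y⟩
    simp
  have hext : (η.restrict (univ ×ˢ B)).map Prod.fst = (θ.restrict (univ ×ˢ B)).map Prod.fst := by
    refine ext_of_generate_finite (measurableCylinders fun _ => Fin ℓ)
      generateFrom_measurableCylinders.symm isPiSystem_measurableCylinders ?_ ?_
    · intro s hs
      have hsm : MeasurableSet s := MeasurableSet.of_mem_measurableCylinders hs
      obtain ⟨I, S, -, rfl⟩ := (mem_measurableCylinders s).1 hs
      rw [← hrect η hsm, ← hrect θ hsm]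
      refine key (I.sup fun i => (-(i : ℤ)).toNat) (fun p hp q hq => ?_) hB
      rw [mem_cylinder] at hp ⊢
      convert hp using 1
      funext i
      have h1 : (-((i : {n : ℤ // n ≤ 0}) : ℤ)).toNat ≤
          I.sup fun i : {n : ℤ // n ≤ 0} => (-(i : ℤ)).toNat :=
        Finset.le_sup (f := fun i : {n : ℤ // n ≤ 0} => (-(i : ℤ)).toNat) i.2
      have h2 := hq _ h1
      have h3 : (⟨-(((-((i : {n : ℤ // n ≤ 0}) : ℤ)).toNat : ℕ) : ℤ), by omega⟩ :
          {n : ℤ // n ≤ 0}) = i := by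
        have := (i : {n : ℤ // n ≤ 0}).2
        apply Subtype.ext
        simp only
        omega
      simp only [past, h3] at h2
      exact h2
    · rw [← hrect η .univ, ← hrect θ .univ]
      exact key 0 (fun _ _ => subset_univ _) hB
  rw [hrect η hA, hrect θ hA, hext]

section Compare

variable {L : Xp ℓ → ℝ} {y₀ : Xp ℓ} {ν : Measure (Xp ℓ)} [IsProbabilityMeasure ν]

/-- The finite-level conditional densities `branchWeight / ∫ branchWeight` approximate `kap`
uniformly on cylinders, up to a multiplicative error governed by the tail of the cocycle. -/
lemma branchWeight_compare (hL : Continuous L) (hc : Continuous (cocycle L y₀)) {n : ℕ} {ε : ℝ}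
    (hε : ∀ z, |cocycle L y₀ z - ∑ k ∈ Finset.range (n + 1), cocycleTerm L y₀ k z| ≤ ε)
    {p q : Xm ℓ} (hq : q ∈ cylM n p) (y : Xp ℓ) :
    branchWeight L n p y ≤ ENNReal.ofReal (Real.exp (2 * ε)) *
        ((∫⁻ y, branchWeight L n p y ∂ν) * ENNReal.ofReal (kap L y₀ ν (q, y))) ∧
      (∫⁻ y, branchWeight L n p y ∂ν) * ENNReal.ofReal (kap L y₀ ν (q, y)) ≤
        ENNReal.ofReal (Real.exp (2 * ε)) * branchWeight L n p y := by
  set f : Xp ℓ → ℝ := fun y => Real.exp (-∑ k ∈ Finset.range (n + 1), L (conc p y k)) with hf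
  set a : Xp ℓ → ℝ := fun y => Real.exp (-cocycle L y₀ (q, y)) with ha
  set c : ℝ := Real.exp (-∑ k ∈ Finset.range (n + 1), L (conc p y₀ k)) with hcdef
  have hc0 : 0 < c := Real.exp_pos _
  have hsum (y : Xp ℓ) : ∑ k ∈ Finset.range (n + 1), L (conc p y k) =
      ∑ k ∈ Finset.range (n + 1), cocycleTerm L y₀ k (q, y) +
        ∑ k ∈ Finset.range (n + 1), L (conc p y₀ k) := by
    rw [← Finset.sum_add_distrib]
    refine Finset.sum_congr rfl fun k hk => ?_
    have hk' : ∀ i ≤ k, past q i = past p i := fun i hi => by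
      have := Finset.mem_range.1 hk
      exact hq i (by omega)
    simp only [cocycleTerm, conc_congr _ k hk']
    ring
  have h1 (y : Xp ℓ) : f y ≤ c * Real.exp ε * a y := by
    simp only [hf, ha, hcdef]
    rw [← Real.exp_add, ← Real.exp_add, Real.exp_le_exp, hsum y]
    have := (abs_le.1 (hε (q, y))).2
    linarith
  have h2 (y : Xp ℓ) : c * a y ≤ Real.exp ε * f y := by
    simp only [hf, ha, hcdef]
    rw [← Real.exp_add, ← Real.exp_add, Real.exp_le_exp, hsum y]
    have := (abs_le.1 (hε (q, y))).1
    linarith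
  have hfc : Continuous f := by
    have (k : ℕ) : Continuous fun y => conc p y k :=
      (continuous_conc k).comp (continuous_const.prodMk continuous_id)
    fun_prop
  have hfi : Integrable f ν :=
    hfc.integrable_of_hasCompactSupport (HasCompactSupport.of_compactSpace _)
  have hai : Integrable a ν := integrable_exp hc q
  have hN : ∫ y, a y ∂ν = normalizer L y₀ ν q := rfl
  have hNpos : 0 < normalizer L y₀ ν q := normalizer_pos hc q
  have hI1 : ∫ y, f y ∂ν ≤ c * Real.exp ε * normalizer L y₀ ν q := by
    rw [← hN, ← integral_const_mul]
    exact integral_mono hfi (hai.const_mul _) h1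
  have hI2 : c * normalizer L y₀ ν q ≤ Real.exp ε * ∫ y, f y ∂ν := by
    rw [← hN, ← integral_const_mul, ← integral_const_mul]
    exact integral_mono (hai.const_mul _) (hfi.const_mul _) h2
  have hI : ∫⁻ y, branchWeight L n p y ∂ν = ENNReal.ofReal (∫ y, f y ∂ν) :=
    (ofReal_integral_eq_lintegral_ofReal hfi
      (Eventually.of_forall fun y => (Real.exp_pos _).le)).symm
  have hI0 : 0 ≤ ∫ y, f y ∂ν := integral_nonneg fun y => (Real.exp_pos _).le
  have hk : kap L y₀ ν (q, y) = a y / normalizer L y₀ ν q := rfl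
  have hb : branchWeight L n p y = ENNReal.ofReal (f y) := rfl
  have ha0 : 0 < a y := Real.exp_pos _
  have he0 : 0 < Real.exp ε := Real.exp_pos _
  have he : Real.exp (2 * ε) = Real.exp ε * Real.exp ε := by rw [← Real.exp_add, two_mul]
  rw [hI, hk, hb, ← ENNReal.ofReal_mul hI0, ← ENNReal.ofReal_mul (Real.exp_pos _).le,
    ← ENNReal.ofReal_mul (Real.exp_pos _).le, he]
  constructor <;> apply ENNReal.ofReal_le_ofReal
  · rw [← mul_div_assoc, ← mul_div_assoc, le_div_iff₀ hNpos]
    calc f y * normalizer L y₀ ν q ≤ (c * Real.exp ε * a y) * normalizer L y₀ ν q :=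
          mul_le_mul_of_nonneg_right (h1 y) hNpos.le
      _ = (Real.exp ε * a y) * (c * normalizer L y₀ ν q) := by ring
      _ ≤ (Real.exp ε * a y) * (Real.exp ε * ∫ y, f y ∂ν) :=
          mul_le_mul_of_nonneg_left hI2 (by positivity)
      _ = _ := by ring
  · rw [← mul_div_assoc, div_le_iff₀ hNpos]
    calc (∫ y, f y ∂ν) * a y ≤ (c * Real.exp ε * normalizer L y₀ ν q) * a y :=
          mul_le_mul_of_nonneg_right hI1 ha0.le
      _ = (Real.exp ε * normalizer L y₀ ν q) * (c * a y) := by ring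
      _ ≤ (Real.exp ε * normalizer L y₀ ν q) * (Real.exp ε * f y) :=
          mul_le_mul_of_nonneg_left (h2 y) (by positivity)
      _ = _ := by ring

end Compare

/-- The law of `(past, future)` is the product of its marginals times the density `kap`. -/
lemma map_eq_withDensity {μ : Measure (XX ℓ)} [IsProbabilityMeasure μ]
    (hinv : MeasurePreserving (shiftT : XX ℓ → XX ℓ) μ μ)
    {L : Xp ℓ → ℝ} {K α : ℝ} (hK : 0 ≤ K) (hα : 0 < α)
    (hL : ∀ x y, |L x - L y| ≤ K * distXp x y ^ (2 * α))
    (hJac : ∀ i : Fin ℓ, ∀ E : Set (Xp ℓ), MeasurableSet E → E ⊆ cylP i →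
      (μ.map Pp) (shiftP '' E) = ∫⁻ x in E, ENNReal.ofReal (Real.exp (L x)) ∂(μ.map Pp))
    (y₀ : Xp ℓ) :
    μ.map (fun x => (Pm x, Pp x)) = ((μ.map Pm).prod (μ.map Pp)).withDensity
      fun z => ENNReal.ofReal (kap L y₀ (μ.map Pp) z) := by
  have hLc : Continuous L := continuous_of_holder (by positivity) hL
  have hc := continuous_cocycle hK hα hL y₀
  obtain ⟨ε, hε0, hε⟩ := exists_cocycle_tail hK hα hL y₀
  have hPP : Measurable fun x : XX ℓ => (Pm x, Pp x) := measurable_Pm.prodMk measurable_Pp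
  have : IsProbabilityMeasure (μ.map Pp) :=
    Measure.isProbabilityMeasure_map measurable_Pp.aemeasurable
  have : IsProbabilityMeasure (μ.map Pm) :=
    Measure.isProbabilityMeasure_map measurable_Pm.aemeasurable
  have : IsProbabilityMeasure (μ.map fun x => (Pm x, Pp x)) :=
    Measure.isProbabilityMeasure_map hPP.aemeasurable
  set ν := μ.map Pp with hν
  have hkm : Measurable fun z => ENNReal.ofReal (kap L y₀ ν z) :=
    (measurable_kap hc).ennreal_ofReal
  let c : ℕ → ENNReal := fun n => ENNReal.ofReal (Real.exp (2 * ε (n + 1)))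
  have hctend : Tendsto c atTop (nhds 1) := by
    have h1 : Tendsto (fun n => ε (n + 1)) atTop (nhds 0) := (tendsto_add_atTop_iff_nat 1).2 hε0
    have h2 := ENNReal.tendsto_ofReal ((Real.continuous_exp.tendsto _).comp (h1.const_mul 2))
    simpa [Function.comp_def] using h2
  have hθ (A : Set (Xm ℓ)) (hA : MeasurableSet A) (B : Set (Xp ℓ)) (hB : MeasurableSet B) :
      (((μ.map Pm).prod ν).withDensity fun z => ENNReal.ofReal (kap L y₀ ν z)) (A ×ˢ B) =
        ∫⁻ q in A, ∫⁻ y in B, ENNReal.ofReal (kap L y₀ ν (q, y)) ∂ν ∂(μ.map Pm) := by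
    rw [withDensity_apply _ (hA.prod hB), ← Measure.prod_restrict,
      lintegral_prod _ hkm.aemeasurable]
  have hmarg (n : ℕ) (p : Xm ℓ) :
      (μ.map Pm) (cylM n p) = ∫⁻ y, branchWeight L n p y ∂ν := by
    have h := map_cylM_prod hinv hLc hJac p n MeasurableSet.univ
    rw [Measure.restrict_univ] at h
    rw [← h, Measure.map_apply measurable_Pm (measurableSet_cylM n p),
      Measure.map_apply hPP ((measurableSet_cylM n p).prod .univ)]
    congr 1
    ext x
    simp
  have hImeas (n : ℕ) (p : Xm ℓ) : Measurable (branchWeight L n p) :=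
    measurable_branchWeight hLc n p
  have hI0 (n : ℕ) (p : Xm ℓ) : ∫⁻ y, branchWeight L n p y ∂ν ≠ 0 := by
    rw [← pos_iff_ne_zero, lintegral_pos_iff_support (hImeas n p)]
    have : Function.support (branchWeight L n p) = univ := by
      ext y
      simp [branchWeight, Real.exp_pos]
    rw [this, measure_univ]
    exact one_pos
  have hItop (n : ℕ) (p : Xm ℓ) : ∫⁻ y, branchWeight L n p y ∂ν ≠ ⊤ := by
    rw [← hmarg]; exact measure_ne_top _ _
  have hin (q : Xm ℓ) : Measurable fun y => ENNReal.ofReal (kap L y₀ ν (q, y)) :=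
    hkm.comp (measurable_const.prodMk measurable_id)
  have hout (B : Set (Xp ℓ)) :
      Measurable fun q => ∫⁻ y in B, ENNReal.ofReal (kap L y₀ ν (q, y)) ∂ν :=
    hkm.lintegral_prod_right'
  refine eq_of_cylM_le hctend ?_ ?_
  -- Integrate the pointwise comparison over the future in `B` and the past in the cylinder, whose
  -- measure is `∫ branchWeight`; then cancel this factor.
  · intro n p B hB
    rw [hθ _ (measurableSet_cylM n p) _ hB, map_cylM_prod hinv hLc hJac p n hB,
      ← ENNReal.mul_le_mul_iff_right (hI0 n p) (hItop n p), mul_left_comm,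
      ← lintegral_const_mul _ (hout B), ← lintegral_const_mul _ ((hout B).const_mul _)]
    calc (∫⁻ y, branchWeight L n p y ∂ν) * ∫⁻ y in B, branchWeight L n p y ∂ν
        = ∫⁻ _ in cylM n p, ∫⁻ y in B, branchWeight L n p y ∂ν ∂(μ.map Pm) := by
          rw [setLIntegral_const, hmarg, mul_comm]
      _ ≤ _ := by
          refine setLIntegral_mono (((hout B).const_mul _).const_mul _) fun q hq => ?_
          rw [← lintegral_const_mul _ (hin q), ← lintegral_const_mul _ ((hin q).const_mul _)]
          exact lintegral_mono fun y => (branchWeight_compare hLc hc (hε (n + 1)) hq y).1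
  · intro n p B hB
    rw [hθ _ (measurableSet_cylM n p) _ hB, map_cylM_prod hinv hLc hJac p n hB,
      ← ENNReal.mul_le_mul_iff_right (hI0 n p) (hItop n p),
      ← lintegral_const_mul _ (hout B)]
    calc _ ≤ ∫⁻ _ in cylM n p, c n * ∫⁻ y in B, branchWeight L n p y ∂ν ∂(μ.map Pm) := by
          refine setLIntegral_mono measurable_const fun q hq => ?_
          rw [← lintegral_const_mul _ (hin q), ← lintegral_const_mul _ (hImeas n p)]
          exact lintegral_mono fun y => (branchWeight_compare hLc hc (hε (n + 1)) hq y).2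
      _ = _ := by rw [setLIntegral_const, hmarg, mul_comm]

lemma map_Pp_restrict_cyl {μ : Measure (XX ℓ)}
    (hinv : MeasurePreserving (shiftT : XX ℓ → XX ℓ) μ μ)
    {L : Xp ℓ → ℝ} (hL : Continuous L)
    (hJac : ∀ i : Fin ℓ, ∀ E : Set (Xp ℓ), MeasurableSet E → E ⊆ cylP i →
      (μ.map Pp) (shiftP '' E) = ∫⁻ x in E, ENNReal.ofReal (Real.exp (L x)) ∂(μ.map Pp))
    (i : Fin ℓ) :
    (μ.restrict (cyl i)).map Pp = (μ.map Pp).withDensity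
      fun y => ENNReal.ofReal (Real.exp (-L (consP i y))) := by
  have hPP : Measurable fun x : XX ℓ => (Pm x, Pp x) := measurable_Pm.prodMk measurable_Pp
  ext B hB
  have h := map_cylM_prod hinv hL hJac (fun _ => i) 0 hB
  have e : (fun x : XX ℓ => (Pm x, Pp x)) ⁻¹' (cylM 0 (fun _ => i) ×ˢ B) = Pp ⁻¹' B ∩ cyl i := by
    ext x
    simp [cylM, past, cyl, Pm, and_comm]
  rw [Measure.map_apply hPP ((measurableSet_cylM _ _).prod hB), e] at h
  rw [Measure.map_apply measurable_Pp hB, Measure.restrict_apply (measurable_Pp hB), h,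
    withDensity_apply _ hB]
  simp [branchWeight, conc, past]

/-- Theorem: Hölder Jacobian implies local product structure.
If the Jacobian `J = J_{μ⁺}T₊` of the one-sided shift with respect to `μ⁺ = (P₊)_*μ`
is strictly positive and Hölder continuous — i.e. `μ⁺(T₊(E)) = ∫_E J dμ⁺` for every
measurable subset `E` of an injectivity domain — then `μ` has local product structure
with Hölder continuous density. -/
theorem local_product_structure_of_holder_jacobian
    {ℓ : ℕ} (hℓ : 0 < ℓ)
    (μ : Measure (XX ℓ)) [IsProbabilityMeasure μ]
    (hinv : MeasurePreserving (shiftT : XX ℓ → XX ℓ) μ μ)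
    (J : Xp ℓ → ℝ)
    (hJpos : ∀ x : Xp ℓ, 0 < J x)
    (hJHolder : ∃ (β C : ℝ), 0 < β ∧
      ∀ x y : Xp ℓ, |J x - J y| ≤ C * distXp x y ^ β)
    (hJac : ∀ i : Fin ℓ, ∀ E : Set (Xp ℓ), MeasurableSet E → E ⊆ cylP i →
      (μ.map Pp) (shiftP '' E) = ∫⁻ x in E, ENNReal.ofReal (J x) ∂(μ.map Pp)) :
    HasLocalProductHolder μ := by
  obtain ⟨β, C, hβ, hJ⟩ := hJHolder
  let y₀ : Xp ℓ := fun _ => ⟨0, hℓ⟩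
  let z₀ : Xm ℓ × Xp ℓ := (fun _ => ⟨0, hℓ⟩, y₀)
  obtain ⟨K, hK, hL⟩ := exists_log_holder y₀ hβ hJpos hJ
  let L : Xp ℓ → ℝ := fun x => Real.log (J x)
  have hα : 0 < β / 2 := by positivity
  have hL' : ∀ x y, |L x - L y| ≤ K * distXp x y ^ (2 * (β / 2)) := by
    rw [mul_div_cancel₀ β two_ne_zero]; exact hL
  have hJac' : ∀ i : Fin ℓ, ∀ E : Set (Xp ℓ), MeasurableSet E → E ⊆ cylP i →
      (μ.map Pp) (shiftP '' E) = ∫⁻ x in E, ENNReal.ofReal (Real.exp (L x)) ∂(μ.map Pp) := by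
    intro i E hE hEi
    simpa only [L, Real.exp_log (hJpos _)] using hJac i E hE hEi
  have hLc : Continuous L := continuous_of_holder hβ hL
  have hc := continuous_cocycle hK hα hL' y₀
  have hPP : Measurable fun x : XX ℓ => (Pm x, Pp x) := measurable_Pm.prodMk measurable_Pp
  have : IsProbabilityMeasure (μ.map Pp) :=
    Measure.isProbabilityMeasure_map measurable_Pp.aemeasurable
  have : IsProbabilityMeasure (μ.map Pm) :=
    Measure.isProbabilityMeasure_map measurable_Pm.aemeasurable
  obtain ⟨C', hC'⟩ := exists_density_holder (y₀ := y₀) (ν := μ.map Pp) hK hα hL' z₀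
  refine ⟨fun z => kap L y₀ (μ.map Pp) z * Real.exp (L (conc z.1 z.2 0)), β / 2, C', hα,
    fun z => mul_pos (div_pos (Real.exp_pos _) (normalizer_pos hc _)) (Real.exp_pos _),
    hC', fun i => ?_⟩
  have hA : MeasurableSet {p : Xm ℓ | past p 0 = i} :=
    measurable_past 0 (measurableSet_singleton i)
  have e1 : (cyl i : Set (XX ℓ)) = Pm ⁻¹' {p : Xm ℓ | past p 0 = i} := by
    ext x; simp [cyl, past, Pm]
  have e2 : (cyl i : Set (XX ℓ)) =
      (fun x => (Pm x, Pp x)) ⁻¹' ({p : Xm ℓ | past p 0 = i} ×ˢ univ) := by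
    rw [e1]; ext x; simp
  have hg : Measurable fun y => ENNReal.ofReal (Real.exp (-L (consP i y))) := by
    have : Continuous fun y => Real.exp (-L (consP i y)) := by
      have := continuous_consP i
      fun_prop
    exact this.measurable.ennreal_ofReal
  have hg' : Measurable fun z : Xm ℓ × Xp ℓ =>
      ENNReal.ofReal (Real.exp (-L (consP i z.2))) := hg.comp measurable_snd
  have hρ : Measurable fun z : Xm ℓ × Xp ℓ =>
      ENNReal.ofReal (kap L y₀ (μ.map Pp) z * Real.exp (L (conc z.1 z.2 0))) := by
    have : Continuous fun z : Xm ℓ × Xp ℓ => Real.exp (L (conc z.1 z.2 0)) :=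
      Real.continuous_exp.comp (hLc.comp (continuous_conc 0))
    exact ((measurable_kap hc).mul this.measurable).ennreal_ofReal
  have hleft : (μ.restrict (cyl i)).map (fun x => (Pm x, Pp x)) =
      (((μ.map Pm).restrict {p : Xm ℓ | past p 0 = i}).prod (μ.map Pp)).withDensity
        fun z => ENNReal.ofReal (kap L y₀ (μ.map Pp) z) := by
    rw [e2, ← Measure.restrict_map hPP (hA.prod .univ),
      map_eq_withDensity hinv hK hα hL' hJac' y₀, restrict_withDensity (hA.prod .univ),
      ← Measure.prod_restrict, Measure.restrict_univ]
  have hpast : (μ.restrict (cyl i)).map Pm =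
      (μ.map Pm).restrict {p : Xm ℓ | past p 0 = i} := by
    rw [e1, Measure.restrict_map measurable_Pm hA]
  rw [hleft, hpast, map_Pp_restrict_cyl hinv hLc hJac' i, prod_withDensity_right hg,
    ← withDensity_mul _ hg' hρ]
  refine withDensity_congr_ae ?_
  -- On the support of the first marginal the past ends in `i`, so that the two Jacobian factors
  -- cancel.
  have hae : ∀ᵐ z ∂(((μ.map Pm).restrict {p : Xm ℓ | past p 0 = i}).prod (μ.map Pp)),
      past z.1 0 = i :=
    Measure.quasiMeasurePreserving_fst.ae (ae_restrict_mem hA)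
  filter_upwards [hae] with z hz
  simp only [Pi.mul_apply, conc, hz]
  rw [← ENNReal.ofReal_mul (Real.exp_pos _).le, mul_left_comm, ← Real.exp_add]
  simp
end
end

section
/- Let T be the left shift on X = {1,…,ℓ}^ℤ and let A : X → GL(d,ℝ) be an α-Hölder continuous fiber bunched cocycle, with ‖A^N(x)‖‖A^N(x)^{−1}‖2^{−Nα} < τ < 1 for all x. Then there exists 0 < β < α such that A admits β-Hölder stable holonomies; that is, the limits H^s_{x,y} = lim_{n→∞} (Aⁿ(y))^{−1}Aⁿ(x) exist for y ∈ W^s_loc(x) and satisfy: (1) H^s_{x,x} = id and H^s_{x,y}∘H^s_{y,z} = H^s_{x,z}; (2) A(y)∘H^s_{x,y} = H^s_{Tx,Ty}∘A(x); (3) ‖H^s_{x,y} − id‖ ≤ C d(x,y)^β; (4) ‖H^s_{x,y} − H^s_{x',y'}‖ ≤ C (d(x,x')^β + d(y,y')^β) for y ∈ W^s_loc(x), y' ∈ W^s_loc(x'). Moreover β depends only on ‖A‖, α, τ and the Lipschitz constant of T, so it can be taken uniform on a C⁰ neighborhood of A. -/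
/-!
Write `a = 2 ^ α` and `Hⁿ(x, y) = (Aⁿ(y))⁻¹ Aⁿ(x)`. By compactness `‖A‖` and `‖A⁻¹‖` are bounded by
some `M ≥ 1`.

*Existence of the limit.* Fix `σ < 1` with `τ < σ ^ N`. Since `A^N` is uniformly continuous, the
strict bunching inequality survives when the two factors are evaluated at nearby points:
`‖A^N(x)‖ ‖A^N(y)⁻¹‖ ≤ (σ a) ^ N` once `d(x, y)` is small (`mixed_block`). For `y ∈ W^s_loc(x)` the
orbits approach each other like `2⁻ⁿ`, so chaining blocks gives
`‖Aⁿ(x)‖ ‖Aⁿ(y)⁻¹‖ ≤ K (σ a) ^ n` (`mixed_growth`). The increment `Hⁿ⁺¹(x, y) - Hⁿ(x, y)` is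
`Aⁿ(y)⁻¹ A(Tⁿy)⁻¹ (A(Tⁿx) - A(Tⁿy)) Aⁿ(x)`, and the Hölder factor `a⁻ⁿ` leaves `O(σ ^ n)`
(`hol_step`). Hence the holonomy exists and is approximated by `Hⁿ` with error `O(σ ^ n)`.

*Hölder dependence.* A crude product estimate gives, with `Λ = 2 M ^ 4 a`,
`‖Hⁿ(x, y) - Hⁿ(x', y')‖ = O(Λ ^ n D ^ α)`, where `D = max (d(x, x')) (d(y, y'))` (`hol_crude`).
Taking `n` of order `-log D` balances `σ ^ n + Λ ^ n D ^ α` and yields `O(D ^ β)`, with `β`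
depending only on `α`, `σ`, `Λ` (`exists_interp_exponent`). The estimate of `H - id` is the special
case of the pairs `(x, y)` and `(x, x)`, and the algebraic identities pass to the limit from `Hⁿ`.

*Uniformity.* If `B` is `C⁰`-close to `A`, then `B` is bounded by a slightly larger `M` and is
bunched at the time `N` of `A` with a constant slightly larger than `τ` (`bunching_of_close`), so
the exponent found for that `N` serves all such `B` (`exists_uniform_exponent`). The bunching time
of `B` itself plays no role.
-/


open MeasureTheory Filter Matrix Set

noncomputable section

attribute [local instance] Matrix.linftyOpNormedAddCommGroup Matrix.linftyOpNormedRing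
attribute [local instance] Classical.propDecidable

variable {ℓ d : ℕ}

/-- Iterates of a `GL(d,ℝ)`-valued cocycle: `Aⁿ(x) = A(Tⁿ⁻¹x)⋯A(x)`. -/
def cocyc (A : XX ℓ → GL (Fin d) ℝ) : ℕ → XX ℓ → GL (Fin d) ℝ
  | 0, _ => 1
  | n + 1, x => cocyc A n (shiftT x) * A x

/-- Backward iterates `A⁻ⁿ(x) = A(T⁻ⁿx)⁻¹⋯A(T⁻¹x)⁻¹`. -/
def cocycNeg (A : XX ℓ → GL (Fin d) ℝ) : ℕ → XX ℓ → GL (Fin d) ℝ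
  | 0, _ => 1
  | n + 1, x => cocycNeg A n (shiftInv x) * (A (shiftInv x))⁻¹

/-- sup distance between two matrix valued functions. -/
def supDist {ι : Type*} [Fintype ι] (A B : XX ℓ → Matrix ι ι ℝ) : ℝ := ⨆ x, ‖A x - B x‖

/-- the uniform distance `d(A,B) = ‖A - B‖_∞ + ‖A⁻¹ - B⁻¹‖_∞`. -/
def unifDist (A B : XX ℓ → GL (Fin d) ℝ) : ℝ :=
  supDist (fun x => (A x : Matrix (Fin d) (Fin d) ℝ)) (fun x => (B x : Matrix (Fin d) (Fin d) ℝ)) +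
  supDist (fun x => (((A x)⁻¹ : GL (Fin d) ℝ) : Matrix (Fin d) (Fin d) ℝ))
    (fun x => (((B x)⁻¹ : GL (Fin d) ℝ) : Matrix (Fin d) (Fin d) ℝ))

/-- `A` is `α`-Hölder continuous with constant `C`. -/
def HolderOn (α C : ℝ) (A : XX ℓ → GL (Fin d) ℝ) : Prop :=
  ∀ x y : XX ℓ, ‖(A x : Matrix (Fin d) (Fin d) ℝ) - (A y : Matrix (Fin d) (Fin d) ℝ)‖ ≤
    C * distX x y ^ α

/-- fiber bunching: for some `N`, `‖A^N(x)‖ ‖A^N(x)⁻¹‖ 2^{-Nα} < 1` for all `x`. -/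
def FiberBunched (α : ℝ) (A : XX ℓ → GL (Fin d) ℝ) : Prop :=
  ∃ N : ℕ, 0 < N ∧ ∀ x : XX ℓ,
    ‖(cocyc A N x : Matrix (Fin d) (Fin d) ℝ)‖ *
      ‖(((cocyc A N x)⁻¹ : GL (Fin d) ℝ) : Matrix (Fin d) (Fin d) ℝ)‖ *
      (2 : ℝ) ^ (-(N : ℝ) * α) < 1

/-- `L` is the maximal Lyapunov exponent of `A` (Furstenberg–Kesten a.e. limit). -/
def IsMaxLyap (μ : Measure (XX ℓ)) (A : XX ℓ → GL (Fin d) ℝ) (L : ℝ) : Prop :=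
  ∀ᵐ x ∂μ, Tendsto
    (fun n : ℕ => (1 / n : ℝ) * Real.log ‖(cocyc A n x : Matrix (Fin d) (Fin d) ℝ)‖)
    atTop (nhds L)

/-- iterates of a matrix valued cocycle. -/
def cocycM {ι : Type*} [Fintype ι] (B : XX ℓ → Matrix ι ι ℝ) : ℕ → XX ℓ → Matrix ι ι ℝ
  | 0, _ => 1
  | n + 1, x => cocycM B n (shiftT x) * B x

/-- backward iterates of a matrix valued cocycle. -/
def cocycMNeg {ι : Type*} [Fintype ι] [DecidableEq ι] (B : XX ℓ → Matrix ι ι ℝ) :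
    ℕ → XX ℓ → Matrix ι ι ℝ
  | 0, _ => 1
  | n + 1, x => cocycMNeg B n (shiftInv x) * (B (shiftInv x))⁻¹

/-- the stable holonomy `H^s_{x,y} = lim_n (Bⁿ(y))⁻¹ Bⁿ(x)`. -/
def stableHolM {ι : Type*} [Fintype ι] [DecidableEq ι] (B : XX ℓ → Matrix ι ι ℝ)
    (x y : XX ℓ) : Matrix ι ι ℝ :=
  limUnder atTop (fun n : ℕ => (cocycM B n y)⁻¹ * cocycM B n x)

/-- the unstable holonomy `H^u_{x,y} = lim_n (B⁻ⁿ(y))⁻¹ B⁻ⁿ(x)`. -/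
def unstableHolM {ι : Type*} [Fintype ι] [DecidableEq ι] (B : XX ℓ → Matrix ι ι ℝ)
    (x y : XX ℓ) : Matrix ι ι ℝ :=
  limUnder atTop (fun n : ℕ => (cocycMNeg B n y)⁻¹ * cocycMNeg B n x)

/-- `a` belongs to the (topological) support of `μ`. -/
def memSupp (μ : Measure (XX ℓ)) (a : XX ℓ) : Prop :=
  ∀ ε : ℝ, 0 < ε → 0 < μ {x | distX x a < ε}

/-- The pinching and twisting condition of Bonatti–Viana for a matrix valued cocycle. -/
def PinchTwistM {ι : Type*} [Fintype ι] [DecidableEq ι]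
    (μ : Measure (XX ℓ)) (B : XX ℓ → Matrix ι ι ℝ) : Prop :=
  ∃ (q l : ℕ) (a z : XX ℓ) (e : ι → ι → ℝ) (χ : ι → ℝ),
    0 < q ∧ shiftT^[q] a = a ∧
    z ∈ WuLoc a ∧ shiftT^[l] z ∈ WsLoc a ∧
    memSupp μ a ∧ memSupp μ z ∧
    (∀ i, e i ≠ 0) ∧
    (∀ i, (cocycM B q a) *ᵥ e i = χ i • e i) ∧
    (∀ i j, i ≠ j → |χ i| ≠ |χ j|) ∧
    (∀ I J : Finset ι, I.card + J.card = Fintype.card ι →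
      (Submodule.span ℝ
          ((fun i => (stableHolM B (shiftT^[l] z) a * cocycM B l z * unstableHolM B a z) *ᵥ e i) '' ↑I)
        ⊔ Submodule.span ℝ (e '' ↑J) = ⊤) ∧
      (Submodule.span ℝ
          ((fun i => (stableHolM B (shiftT^[l] z) a * cocycM B l z * unstableHolM B a z)⁻¹ *ᵥ e i) '' ↑I)
        ⊔ Submodule.span ℝ (e '' ↑J) = ⊤))

/-- Pinching and twisting for a `GL(d,ℝ)`-valued cocycle. -/
def PinchTwist (μ : Measure (XX ℓ)) (A : XX ℓ → GL (Fin d) ℝ) : Prop :=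
  PinchTwistM μ (fun x => (A x : Matrix (Fin d) (Fin d) ℝ))
/-- The limits `H^s_{x,y} = lim_n (Aⁿ(y))⁻¹Aⁿ(x)` exist for `y ∈ W^s_loc(x)` and form a
family of `β`-Hölder stable holonomies with constant `C`, i.e. they satisfy properties
(1)–(4) of the definition of stable holonomies. -/
def IsHolderStableHolonomies {ℓ d : ℕ} (β C : ℝ) (A : XX ℓ → GL (Fin d) ℝ) : Prop :=
  (∀ x y : XX ℓ, y ∈ WsLoc x →
    Tendsto (fun n : ℕ =>
        (cocycM (fun z => (A z : Matrix (Fin d) (Fin d) ℝ)) n y)⁻¹ *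
          cocycM (fun z => (A z : Matrix (Fin d) (Fin d) ℝ)) n x)
      atTop (nhds (stableHolM (fun z => (A z : Matrix (Fin d) (Fin d) ℝ)) x y))) ∧
  (∀ x : XX ℓ, stableHolM (fun z => (A z : Matrix (Fin d) (Fin d) ℝ)) x x = 1) ∧
  (∀ x y z : XX ℓ, y ∈ WsLoc x → z ∈ WsLoc x →
    stableHolM (fun w => (A w : Matrix (Fin d) (Fin d) ℝ)) y z *
      stableHolM (fun w => (A w : Matrix (Fin d) (Fin d) ℝ)) x y =
      stableHolM (fun w => (A w : Matrix (Fin d) (Fin d) ℝ)) x z) ∧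
  (∀ x y : XX ℓ, y ∈ WsLoc x →
    (A y : Matrix (Fin d) (Fin d) ℝ) *
        stableHolM (fun w => (A w : Matrix (Fin d) (Fin d) ℝ)) x y =
      stableHolM (fun w => (A w : Matrix (Fin d) (Fin d) ℝ)) (shiftT x) (shiftT y) *
        (A x : Matrix (Fin d) (Fin d) ℝ)) ∧
  (∀ x y : XX ℓ, y ∈ WsLoc x →
    ‖stableHolM (fun w => (A w : Matrix (Fin d) (Fin d) ℝ)) x y - 1‖ ≤ C * distX x y ^ β) ∧
  (∀ x x' y y' : XX ℓ, y ∈ WsLoc x → y' ∈ WsLoc x' →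
    ‖stableHolM (fun w => (A w : Matrix (Fin d) (Fin d) ℝ)) x y -
        stableHolM (fun w => (A w : Matrix (Fin d) (Fin d) ℝ)) x' y'‖ ≤
      C * (distX x x' ^ β + distX y y' ^ β))

/-! ### The metric on the shift space -/

theorem distX_nonneg (x y : XX ℓ) : 0 ≤ distX x y := by
  unfold distX; split_ifs <;> positivity

theorem distX_self (x : XX ℓ) : distX x x = 0 := by
  simp [distX]

theorem distX_comm (x y : XX ℓ) : distX x y = distX y x := by
  unfold distX
  simp only [eq_comm, ne_comm]

theorem distX_le_iff (x y : XX ℓ) (m : ℕ) :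
    distX x y ≤ (2⁻¹ : ℝ) ^ m ↔ ∀ i : ℤ, |i| < m → x i = y i := by
  by_cases h : x = y
  · subst h
    simp [distX_self]
  · have hne : {n : ℕ | x (n : ℤ) ≠ y (n : ℤ) ∨ x (-(n : ℤ)) ≠ y (-(n : ℤ))}.Nonempty := by
      obtain ⟨i, hi⟩ := Function.ne_iff.mp h
      rcases Int.natAbs_eq i with h1 | h1
      · exact ⟨i.natAbs, Or.inl (by rwa [← h1])⟩
      · exact ⟨i.natAbs, Or.inr (by rwa [← h1])⟩
    have hd : distX x y = (2⁻¹ : ℝ) ^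
        sInf {n : ℕ | x (n : ℤ) ≠ y (n : ℤ) ∨ x (-(n : ℤ)) ≠ y (-(n : ℤ))} := by
      rw [distX, if_neg h, _root_.zpow_neg, zpow_natCast, inv_pow]
    rw [hd, pow_le_pow_iff_right_of_lt_one₀ (by norm_num) (by norm_num)]
    constructor
    · intro hm i hi
      by_contra hc
      have : i.natAbs ∈ {n : ℕ | x (n : ℤ) ≠ y (n : ℤ) ∨ x (-(n : ℤ)) ≠ y (-(n : ℤ))} := by
        rcases Int.natAbs_eq i with h1 | h1
        · exact Or.inl (by rwa [← h1])
        · exact Or.inr (by rwa [← h1])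
      have := Nat.sInf_le this
      have h3 : (i.natAbs : ℤ) < m := by rwa [Int.natCast_natAbs]
      omega
    · intro H
      by_contra hc
      push Not at hc
      rcases Nat.sInf_mem hne with h1 | h1
      · exact h1 (H _ (by rw [abs_of_nonneg (by positivity)]; exact_mod_cast hc))
      · exact h1 (H _ (by rw [abs_neg, abs_of_nonneg (by positivity)]; exact_mod_cast hc))

theorem distX_le_one (x y : XX ℓ) : distX x y ≤ 1 := by
  have := (distX_le_iff x y 0).2 (fun i hi => absurd hi (by simp))
  simpa using this

theorem distX_eq_zero_or (x y : XX ℓ) : distX x y = 0 ∨ ∃ k : ℕ, distX x y = (2⁻¹ : ℝ) ^ k := by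
  unfold distX
  split_ifs
  · exact Or.inl rfl
  · exact Or.inr ⟨sInf {n : ℕ | x (n : ℤ) ≠ y (n : ℤ) ∨ x (-(n : ℤ)) ≠ y (-(n : ℤ))},
      by rw [_root_.zpow_neg, zpow_natCast, inv_pow]⟩

theorem shiftT_iterate (n : ℕ) (x : XX ℓ) (i : ℤ) : (shiftT^[n] x) i = x (i + n) := by
  induction n generalizing x with
  | zero => simp
  | succ n ih =>
    rw [Function.iterate_succ_apply, ih, shiftT]
    congr 1; push_cast; ring

theorem distX_shiftT_le (x y : XX ℓ) : distX (shiftT x) (shiftT y) ≤ 2 * distX x y := by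
  rcases distX_eq_zero_or x y with h | ⟨k, h⟩
  · have hxy : x = y := by
      by_contra hc
      rw [distX, if_neg hc] at h
      exact (zpow_pos (two_pos (α := ℝ)) _).ne' h
    subst hxy
    simp [distX_self]
  · cases k with
    | zero =>
      rw [h]
      linarith [distX_le_one (shiftT x) (shiftT y)]
    | succ k =>
      have h2 : distX (shiftT x) (shiftT y) ≤ (2⁻¹ : ℝ) ^ k := by
        rw [distX_le_iff]
        intro i hi
        refine (distX_le_iff x y (k + 1)).1 h.le _ ?_
        rw [abs_lt] at hi ⊢
        push_cast
        omega
      rw [h, pow_succ]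
      linarith

theorem distX_iterate_le (n : ℕ) (x y : XX ℓ) :
    distX (shiftT^[n] x) (shiftT^[n] y) ≤ 2 ^ n * distX x y := by
  induction n with
  | zero => simp
  | succ n ih =>
    rw [Function.iterate_succ_apply', Function.iterate_succ_apply', pow_succ]
    linarith [distX_shiftT_le (shiftT^[n] x) (shiftT^[n] y)]

theorem distX_iterate_of_WsLoc {x y : XX ℓ} (h : y ∈ WsLoc x) (n : ℕ) :
    distX (shiftT^[n] x) (shiftT^[n] y) ≤ (2⁻¹ : ℝ) ^ n := by
  rw [distX_le_iff]
  intro i hi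
  rw [shiftT_iterate, shiftT_iterate, h _ (by rw [abs_lt] at hi; omega)]

/-! ### Matrices with the operator norm -/

/-- Only an inequality, because the norm of `1` vanishes when `d = 0`. -/
theorem norm_one_mat_le : ‖(1 : Matrix (Fin d) (Fin d) ℝ)‖ ≤ 1 := by
  cases d with
  | zero => rw [Subsingleton.elim (1 : Matrix (Fin 0) (Fin 0) ℝ) 0]; simp
  | succ d =>
    rw [← Matrix.diagonal_one, Matrix.linfty_opNorm_diagonal]
    simp

/-- The entrywise topology of matrices, in which `nhds` is taken, is that of the operator norm. -/
theorem tendsto_mat_iff {ι : Type*} {l : Filter ι} {f : ι → Matrix (Fin d) (Fin d) ℝ}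
    {a : Matrix (Fin d) (Fin d) ℝ} :
    Tendsto f l (nhds a) ↔ Tendsto (fun i => ‖f i - a‖) l (nhds 0) :=
  tendsto_iff_norm_sub_tendsto_zero

theorem isCompact_bound {f : XX ℓ → Matrix (Fin d) (Fin d) ℝ} (hf : Continuous f) :
    ∃ M, ∀ x, ‖f x‖ ≤ M := by
  obtain ⟨M, h⟩ := isCompact_univ.exists_bound_of_continuousOn (f := f) hf.continuousOn
  exact ⟨M, fun x => h x trivial⟩

/-- Geometrically small increments give a limit, with geometric rate of convergence. -/
theorem exists_lim_of_geometric {f : ℕ → Matrix (Fin d) (Fin d) ℝ} {K r : ℝ} (hr : r < 1)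
    (h : ∀ n, ‖f (n + 1) - f n‖ ≤ K * r ^ n) :
    ∃ a, Tendsto f atTop (nhds a) ∧ ∀ n, ‖f n - a‖ ≤ K / (1 - r) * r ^ n := by
  have h' : ∀ n, dist (f n) (f (n + 1)) ≤ K * r ^ n := fun n => by
    rw [dist_comm, dist_eq_norm]; exact h n
  have : @CompleteSpace (Matrix (Fin d) (Fin d) ℝ) PseudoMetricSpace.toUniformSpace :=
    inferInstanceAs (CompleteSpace (Fin d → Fin d → ℝ))
  obtain ⟨a, ha⟩ := cauchySeq_tendsto_of_complete (cauchySeq_of_le_geometric r K hr h')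
  refine ⟨a, ha, fun n => ?_⟩
  have := dist_le_of_le_geometric_of_tendsto r K hr h' ha n
  rw [dist_eq_norm] at this
  exact this.trans_eq (by ring)

-- `⟪g⟫` is the matrix underlying `g : GL (Fin d) ℝ`.
local notation "⟪" g "⟫" => Units.val (α := Matrix (Fin _) (Fin _) ℝ) g

/-! ### Norm estimates for iterates -/

/-- The identity matrix in `cocycM` is built with classical decidability of equality on `Fin d`, so
the case `n = 0` is not `rfl`. -/
theorem cocycM_eq (B : XX ℓ → GL (Fin d) ℝ) (n : ℕ) (x : XX ℓ) :
    cocycM (fun z => (B z : Matrix (Fin d) (Fin d) ℝ)) n x = cocyc B n x := by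
  induction n generalizing x with
  | zero => 
    have key (D₁ D₂ : DecidableEq (Fin d)) :
        (@One.one (Matrix (Fin d) (Fin d) ℝ) (@Matrix.one _ _ D₁ _ _)) =
          @One.one (Matrix (Fin d) (Fin d) ℝ) (@Matrix.one _ _ D₂ _ _) := by
      rw [Subsingleton.elim D₁ D₂]
    exact key _ _
  | succ n ih => simp [cocycM, cocyc, ih]

theorem cocyc_add (B : XX ℓ → GL (Fin d) ℝ) (m n : ℕ) (x : XX ℓ) :
    cocyc B (m + n) x = cocyc B m (shiftT^[n] x) * cocyc B n x := by
  induction n generalizing x with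
  | zero => rw [add_zero, cocyc, mul_one]; rfl
  | succ n ih =>
    rw [← add_assoc, cocyc, ih, cocyc, mul_assoc, Function.iterate_succ_apply]

theorem norm_cocyc_le {B : XX ℓ → GL (Fin d) ℝ} {M : ℝ} (hM : 1 ≤ M)
    (hB : ∀ x, ‖⟪B x⟫‖ ≤ M) (n : ℕ) (x : XX ℓ) : ‖⟪cocyc B n x⟫‖ ≤ M ^ n := by
  induction n generalizing x with
  | zero => simpa [cocyc] using norm_one_mat_le
  | succ n ih =>
    rw [cocyc, Units.val_mul, pow_succ]
    refine (norm_mul_le _ _).trans ?_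
    gcongr
    · exact ih _
    · exact hB x

theorem norm_cocyc_inv_le {B : XX ℓ → GL (Fin d) ℝ} {M : ℝ} (hM : 1 ≤ M)
    (hB : ∀ x, ‖⟪(B x)⁻¹⟫‖ ≤ M) (n : ℕ) (x : XX ℓ) : ‖⟪(cocyc B n x)⁻¹⟫‖ ≤ M ^ n := by
  induction n generalizing x with
  | zero => simpa [cocyc] using norm_one_mat_le
  | succ n ih =>
    rw [cocyc, _root_.mul_inv_rev, Units.val_mul, pow_succ']
    refine (norm_mul_le _ _).trans ?_
    gcongr
    · exact hB x
    · exact ih _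

/-- Comparison of two cocycles along two orbits that stay `ε`-close. It is used both for one cocycle
at two points and for two cocycles at one point. -/
theorem norm_cocyc_sub_le {A B : XX ℓ → GL (Fin d) ℝ} {M ε : ℝ} (hM : 1 ≤ M)
    (hA : ∀ x, ‖⟪A x⟫‖ ≤ M) (hB : ∀ x, ‖⟪B x⟫‖ ≤ M) (hε : 0 ≤ ε) (n : ℕ) (x y : XX ℓ)
    (h : ∀ j < n, ‖⟪A (shiftT^[j] x)⟫ - ⟪B (shiftT^[j] y)⟫‖ ≤ ε) :
    ‖⟪cocyc A n x⟫ - ⟪cocyc B n y⟫‖ ≤ n * M ^ n * ε := by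
  induction n generalizing x y with
  | zero => simp [cocyc]
  | succ n ih =>
    have h1 := ih (shiftT x) (shiftT y) (fun j hj => by
      simpa only [Function.iterate_succ_apply] using h (j + 1) (by omega))
    have h0 := h 0 (by omega)
    simp only [Function.iterate_zero, id] at h0
    have e : ⟪cocyc A (n + 1) x⟫ - ⟪cocyc B (n + 1) y⟫ =
        (⟪cocyc A n (shiftT x)⟫ - ⟪cocyc B n (shiftT y)⟫) * ⟪A x⟫
          + ⟪cocyc B n (shiftT y)⟫ * (⟪A x⟫ - ⟪B y⟫) := by
      simp only [cocyc, Units.val_mul]; noncomm_ring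
    have hMn : M ^ n ≤ M ^ (n + 1) := pow_le_pow_right₀ hM (by omega)
    rw [e]
    calc _ ≤ (n * M ^ n * ε) * M + M ^ n * ε := by
          refine (norm_add_le _ _).trans (add_le_add ?_ ?_)
          · refine (norm_mul_le _ _).trans ?_
            gcongr
            exact hA x
          · refine (norm_mul_le _ _).trans ?_
            gcongr
            exact norm_cocyc_le hM hB _ _
      _ ≤ (n * M ^ n * ε) * M + M ^ (n + 1) * ε := by gcongr
      _ = _ := by push_cast; ring

theorem norm_inv_sub_inv_le (g h : GL (Fin d) ℝ) {K : ℝ} (hg : ‖⟪g⁻¹⟫‖ ≤ K)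
    (hh : ‖⟪h⁻¹⟫‖ ≤ K) : ‖⟪g⁻¹⟫ - ⟪h⁻¹⟫‖ ≤ K ^ 2 * ‖⟪g⟫ - ⟪h⟫‖ := by
  have hK : 0 ≤ K := (norm_nonneg _).trans hg
  have e : ⟪g⁻¹⟫ - ⟪h⁻¹⟫ = - (⟪g⁻¹⟫ * (⟪g⟫ - ⟪h⟫) * ⟪h⁻¹⟫) := by
    rw [mul_sub, sub_mul, Units.inv_mul, one_mul, Units.mul_inv_cancel_right]
    abel
  rw [e, norm_neg]
  calc _ ≤ K * ‖⟪g⟫ - ⟪h⟫‖ * K := by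
        refine (norm_mul_le _ _).trans ?_
        gcongr
        refine (norm_mul_le _ _).trans ?_
        gcongr
    _ = _ := by ring

theorem HolderOn.continuous {α C : ℝ} (hα : 0 < α) {B : XX ℓ → GL (Fin d) ℝ}
    (h : HolderOn α C B) : Continuous fun x => ⟪B x⟫ := by
  rw [continuous_iff_continuousAt]
  intro x
  rw [ContinuousAt, tendsto_mat_iff]
  have hz : Tendsto (fun m : ℕ => |C| * ((2⁻¹ : ℝ) ^ m) ^ α) atTop (nhds 0) := by
    have h1 : Tendsto (fun m : ℕ => ((2⁻¹ : ℝ) ^ m)) atTop (nhds 0) :=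
      tendsto_pow_atTop_nhds_zero_of_lt_one (by norm_num) (by norm_num)
    simpa [Real.zero_rpow hα.ne'] using (h1.rpow_const (Or.inr hα.le)).const_mul |C|
  rw [Metric.tendsto_nhds]
  intro ε hε
  obtain ⟨m, hm⟩ := (hz.eventually (gt_mem_nhds hε)).exists
  have : ∀ᶠ y in nhds x, ∀ i ∈ Finset.Ioo (-(m : ℤ)) m, y i = x i := by
    rw [Filter.eventually_all_finset]
    intro i _
    exact (continuous_apply i).continuousAt.eventually_mem
      ((isOpen_discrete {x i}).mem_nhds rfl)
  filter_upwards [this] with y hy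
  have hd : distX y x ≤ (2⁻¹ : ℝ) ^ m := by
    rw [distX_le_iff]
    intro i hi
    exact hy i (by rw [Finset.mem_Ioo]; exact abs_lt.1 hi)
  rw [Real.dist_eq, sub_zero, abs_norm]
  refine lt_of_le_of_lt ((h y x).trans ?_) hm
  have := distX_nonneg y x
  gcongr
  exact le_abs_self C

theorem HolderOn.exists_bound {α C : ℝ} (hα : 0 < α) {B : XX ℓ → GL (Fin d) ℝ}
    (h : HolderOn α C B) : ∃ M : ℝ, 1 ≤ M ∧ (∀ x, ‖⟪B x⟫‖ ≤ M) ∧ ∀ x, ‖⟪(B x)⁻¹⟫‖ ≤ M := by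
  have hc := h.continuous hα
  have hi : Continuous fun x => ⟪(B x)⁻¹⟫ := by
    have e : (fun x => ⟪(B x)⁻¹⟫) = fun x => (⟪B x⟫.det)⁻¹ • ⟪B x⟫.adjugate := by
      funext x
      rw [Matrix.coe_units_inv, Matrix.inv_def, Ring.inverse_eq_inv']
    rw [e]
    refine Continuous.smul (Continuous.inv₀ hc.matrix_det fun x => ?_) hc.matrix_adjugate
    exact ((Matrix.isUnit_iff_isUnit_det _).1 (B x).isUnit).ne_zero
  obtain ⟨M₁, h₁⟩ := isCompact_bound hc
  obtain ⟨M₂, h₂⟩ := isCompact_bound hi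
  exact ⟨max 1 (max M₁ M₂), le_max_left _ _,
    fun x => (h₁ x).trans (by simp), fun x => (h₂ x).trans (by simp)⟩

/-- Iterates are `α`-Hölder, with a constant that grows at most exponentially in `n`. -/
theorem norm_cocyc_holder {α C M : ℝ} (hα : 0 < α) {B : XX ℓ → GL (Fin d) ℝ}
    (hB : HolderOn α C B) (hM : 1 ≤ M) (hBM : ∀ x, ‖⟪B x⟫‖ ≤ M) (n : ℕ) (x y : XX ℓ) :
    ‖⟪cocyc B n x⟫ - ⟪cocyc B n y⟫‖ ≤
      n * M ^ n * (|C| * (((2 : ℝ) ^ α) ^ n * distX x y ^ α)) := by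
  have hd := distX_nonneg x y
  refine norm_cocyc_sub_le hM hBM hBM (by positivity) n x y fun j hj => ?_
  refine (hB _ _).trans ?_
  have h1 : distX (shiftT^[j] x) (shiftT^[j] y) ^ α ≤ ((2 : ℝ) ^ α) ^ n * distX x y ^ α := by
    have e : ((2 : ℝ) ^ α) ^ n * distX x y ^ α = ((2 : ℝ) ^ n * distX x y) ^ α := by
      rw [Real.mul_rpow (by positivity) hd, Real.rpow_pow_comm (by norm_num)]
    rw [e]
    refine Real.rpow_le_rpow (distX_nonneg _ _) ((distX_iterate_le j x y).trans ?_) hα.le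
    gcongr
    norm_num
  have h0 : 0 ≤ distX (shiftT^[j] x) (shiftT^[j] y) ^ α := Real.rpow_nonneg (distX_nonneg _ _) _
  exact mul_le_mul (le_abs_self C) h1 h0 (abs_nonneg C)

/-! ### Finite-time holonomies -/

/-- The finite-time holonomy `(Bⁿ(y))⁻¹ Bⁿ(x)`, whose limit is the stable holonomy. -/
def hol (B : XX ℓ → GL (Fin d) ℝ) (n : ℕ) (x y : XX ℓ) : Matrix (Fin d) (Fin d) ℝ :=
  ⟪(cocyc B n y)⁻¹ * cocyc B n x⟫

theorem cocycM_inv_mul (B : XX ℓ → GL (Fin d) ℝ) (n : ℕ) (x y : XX ℓ) :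
    (cocycM (fun z => (B z : Matrix (Fin d) (Fin d) ℝ)) n y)⁻¹ *
      cocycM (fun z => (B z : Matrix (Fin d) (Fin d) ℝ)) n x = hol B n x y := by
  rw [cocycM_eq, cocycM_eq, hol, Units.val_mul, Matrix.coe_units_inv]

theorem stableHolM_eq {B : XX ℓ → GL (Fin d) ℝ} {x y : XX ℓ} {L : Matrix (Fin d) (Fin d) ℝ}
    (h : Tendsto (fun n => hol B n x y) atTop (nhds L)) :
    stableHolM (fun z => (B z : Matrix (Fin d) (Fin d) ℝ)) x y = L := by
  rw [stableHolM]
  refine Tendsto.limUnder_eq ?_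
  simpa only [cocycM_inv_mul] using h

/-- Finite-time holonomies are `α`-Hölder in the pair of base points, with an exponentially large
constant. Neither bunching nor stable sets are involved. -/
theorem hol_crude {α C M : ℝ} (hα : 0 < α) {B : XX ℓ → GL (Fin d) ℝ}
    (hB : HolderOn α C B) (hM : 1 ≤ M) (hBM : ∀ x, ‖⟪B x⟫‖ ≤ M)
    (hBM' : ∀ x, ‖⟪(B x)⁻¹⟫‖ ≤ M) (n : ℕ) {x y x' y' : XX ℓ} {D : ℝ}
    (hx : distX x x' ≤ D) (hy : distX y y' ≤ D) :
    ‖hol B n x y - hol B n x' y'‖ ≤ 2 * |C| * ((2 * M ^ 4 * (2 : ℝ) ^ α) ^ n * D ^ α) := by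
  have hD : 0 ≤ D := (distX_nonneg _ _).trans hx
  have hM0 : 0 ≤ M := by linarith
  set E : ℝ := n * M ^ n * (|C| * (((2 : ℝ) ^ α) ^ n * D ^ α)) with hE
  have hE0 : 0 ≤ E := by positivity
  have key : ∀ u v : XX ℓ, distX u v ≤ D → ‖⟪cocyc B n u⟫ - ⟪cocyc B n v⟫‖ ≤ E := by
    intro u v h
    refine (norm_cocyc_holder hα hB hM hBM n u v).trans ?_
    have := distX_nonneg u v
    rw [hE]
    gcongr
  have hI := norm_inv_sub_inv_le (cocyc B n y) (cocyc B n y') (norm_cocyc_inv_le hM hBM' n y)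
    (norm_cocyc_inv_le hM hBM' n y')
  have e : hol B n x y - hol B n x' y' =
      (⟪(cocyc B n y)⁻¹⟫ - ⟪(cocyc B n y')⁻¹⟫) * ⟪cocyc B n x⟫ +
        ⟪(cocyc B n y')⁻¹⟫ * (⟪cocyc B n x⟫ - ⟪cocyc B n x'⟫) := by
    simp only [hol, Units.val_mul]; noncomm_ring
  have hMn : M ^ n ≤ M ^ (3 * n) := pow_le_pow_right₀ hM (by omega)
  have hn : (n : ℝ) ≤ 2 ^ n := by exact_mod_cast Nat.lt_two_pow_self.le
  calc ‖hol B n x y - hol B n x' y'‖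
      ≤ ((M ^ n) ^ 2 * E) * M ^ n + M ^ n * E := by
        rw [e]
        refine (norm_add_le _ _).trans (add_le_add ?_ ?_)
        · refine (norm_mul_le _ _).trans (mul_le_mul (hI.trans ?_) (norm_cocyc_le hM hBM _ _)
            (norm_nonneg _) (by positivity))
          gcongr
          exact key _ _ hy
        · refine (norm_mul_le _ _).trans (mul_le_mul (norm_cocyc_inv_le hM hBM' _ _) (key _ _ hx)
            (norm_nonneg _) (by positivity))
    _ ≤ M ^ (3 * n) * E + M ^ (3 * n) * E := by
        gcongr ?_ + ?_ * E
        apply le_of_eq; ring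
    _ = n * (2 * |C| * (M ^ (4 * n) * (((2 : ℝ) ^ α) ^ n * D ^ α))) := by
        rw [hE]; ring
    _ ≤ 2 ^ n * (2 * |C| * (M ^ (4 * n) * (((2 : ℝ) ^ α) ^ n * D ^ α))) := by gcongr
    _ = _ := by rw [mul_pow, mul_pow, ← pow_mul]; ring

/-- Fiber bunching at time `N` with the two factors evaluated at different nearby points, at the cost
of replacing `τ` by the larger `σ ^ N`. -/
theorem mixed_block {α C M τ σ : ℝ} {N : ℕ} (hα : 0 < α) {B : XX ℓ → GL (Fin d) ℝ}
    (hB : HolderOn α C B) (hM : 1 ≤ M) (hBM : ∀ x, ‖⟪B x⟫‖ ≤ M)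
    (hBM' : ∀ x, ‖⟪(B x)⁻¹⟫‖ ≤ M) (hσ : τ < σ ^ N)
    (hQ : ∀ x, ‖⟪cocyc B N x⟫‖ * ‖⟪(cocyc B N x)⁻¹⟫‖ ≤ τ * ((2 : ℝ) ^ α) ^ N) :
    ∃ m : ℕ, ∀ x y, distX x y ≤ (2⁻¹ : ℝ) ^ m →
      ‖⟪cocyc B N x⟫‖ * ‖⟪(cocyc B N y)⁻¹⟫‖ ≤ (σ * (2 : ℝ) ^ α) ^ N := by
  have hz : Tendsto (fun m : ℕ => N * M ^ N * |C| * M ^ N * ((2⁻¹ : ℝ) ^ m) ^ α)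
      atTop (nhds 0) := by
    have h1 : Tendsto (fun m : ℕ => ((2⁻¹ : ℝ) ^ m)) atTop (nhds 0) :=
      tendsto_pow_atTop_nhds_zero_of_lt_one (by norm_num) (by norm_num)
    simpa [Real.zero_rpow hα.ne'] using
      (h1.rpow_const (Or.inr hα.le)).const_mul (N * M ^ N * |C| * M ^ N)
  obtain ⟨m, hm⟩ := (hz.eventually (gt_mem_nhds (sub_pos.2 hσ))).exists
  refine ⟨m, fun x y hxy => ?_⟩
  have hd := distX_nonneg x y
  have h1 : ‖⟪cocyc B N x⟫‖ ≤ ‖⟪cocyc B N y⟫‖ +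
      N * M ^ N * (|C| * (((2 : ℝ) ^ α) ^ N * ((2⁻¹ : ℝ) ^ m) ^ α)) := by
    refine (norm_le_norm_add_norm_sub' _ ⟪cocyc B N y⟫).trans ?_
    gcongr
    refine (norm_cocyc_holder hα hB hM hBM N x y).trans ?_
    gcongr
  calc _ ≤ (‖⟪cocyc B N y⟫‖ +
        N * M ^ N * (|C| * (((2 : ℝ) ^ α) ^ N * ((2⁻¹ : ℝ) ^ m) ^ α))) *
          ‖⟪(cocyc B N y)⁻¹⟫‖ := by gcongr
    _ ≤ τ * ((2 : ℝ) ^ α) ^ N +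
        N * M ^ N * (|C| * (((2 : ℝ) ^ α) ^ N * ((2⁻¹ : ℝ) ^ m) ^ α)) * M ^ N := by
        rw [add_mul]
        refine add_le_add (hQ y) ?_
        gcongr
        exact norm_cocyc_inv_le hM hBM' N y
    _ = (τ + N * M ^ N * |C| * M ^ N * ((2⁻¹ : ℝ) ^ m) ^ α) * ((2 : ℝ) ^ α) ^ N := by ring
    _ ≤ σ ^ N * ((2 : ℝ) ^ α) ^ N := by gcongr; linarith
    _ = _ := by rw [mul_pow]

/-- Along a local stable set the two orbits are eventually close enough for `mixed_block`; the first
`m + N` iterates are absorbed into the constant. -/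
theorem mixed_growth {M r : ℝ} {N m : ℕ} {B : XX ℓ → GL (Fin d) ℝ} (hN : 0 < N)
    (hM : 1 ≤ M) (hBM : ∀ x, ‖⟪B x⟫‖ ≤ M) (hBM' : ∀ x, ‖⟪(B x)⁻¹⟫‖ ≤ M) (hr : 1 ≤ r)
    (hm : ∀ x y, distX x y ≤ (2⁻¹ : ℝ) ^ m →
      ‖⟪cocyc B N x⟫‖ * ‖⟪(cocyc B N y)⁻¹⟫‖ ≤ r ^ N)
    {x y : XX ℓ} (hy : y ∈ WsLoc x) (n : ℕ) :
    ‖⟪cocyc B n x⟫‖ * ‖⟪(cocyc B n y)⁻¹⟫‖ ≤ M ^ (2 * (m + N)) * r ^ n := by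
  induction n using Nat.strong_induction_on with
  | _ n ih =>
  rcases lt_or_ge n (m + N) with h | h
  · calc _ ≤ M ^ n * M ^ n := by
          gcongr
          · exact norm_cocyc_le hM hBM n x
          · exact norm_cocyc_inv_le hM hBM' n y
      _ = M ^ (2 * n) := by ring
      _ ≤ M ^ (2 * (m + N)) := pow_le_pow_right₀ hM (by omega)
      _ ≤ _ := le_mul_of_one_le_right (by positivity) (one_le_pow₀ hr)
  · obtain ⟨k, rfl⟩ : ∃ k, n = N + k := ⟨n - N, by omega⟩
    have h1 := ih k (by omega)
    have h2 : distX (shiftT^[k] x) (shiftT^[k] y) ≤ (2⁻¹ : ℝ) ^ m :=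
      (distX_iterate_of_WsLoc hy k).trans
        (pow_le_pow_of_le_one (by norm_num) (by norm_num) (by omega))
    have h3 := hm _ _ h2
    rw [cocyc_add, cocyc_add, _root_.mul_inv_rev, Units.val_mul, Units.val_mul]
    calc _ ≤ (‖⟪cocyc B N (shiftT^[k] x)⟫‖ * ‖⟪cocyc B k x⟫‖) *
          (‖⟪(cocyc B k y)⁻¹⟫‖ * ‖⟪(cocyc B N (shiftT^[k] y))⁻¹⟫‖) := by
          gcongr <;> exact norm_mul_le _ _
      _ = (‖⟪cocyc B N (shiftT^[k] x)⟫‖ * ‖⟪(cocyc B N (shiftT^[k] y))⁻¹⟫‖) *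
          (‖⟪cocyc B k x⟫‖ * ‖⟪(cocyc B k y)⁻¹⟫‖) := by ring
      _ ≤ r ^ N * (M ^ (2 * (m + N)) * r ^ k) := by gcongr
      _ = _ := by rw [pow_add]; ring

/-- The growth rate `σ * 2 ^ α` is beaten by the contraction `2 ^ (-α)` of the Hölder distance. -/
theorem hol_step {α C M K σ : ℝ} (hα : 0 < α) {B : XX ℓ → GL (Fin d) ℝ}
    (hB : HolderOn α C B) (hM : 1 ≤ M) (hBM' : ∀ x, ‖⟪(B x)⁻¹⟫‖ ≤ M)
    {x y : XX ℓ} (hy : y ∈ WsLoc x) (n : ℕ)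
    (hK : ‖⟪cocyc B n x⟫‖ * ‖⟪(cocyc B n y)⁻¹⟫‖ ≤ K * (σ * (2 : ℝ) ^ α) ^ n) :
    ‖hol B (n + 1) x y - hol B n x y‖ ≤ (K * M * |C|) * σ ^ n := by
  have e : hol B (n + 1) x y - hol B n x y = ⟪(cocyc B n y)⁻¹⟫ *
      (⟪(B (shiftT^[n] y))⁻¹⟫ * (⟪B (shiftT^[n] x)⟫ - ⟪B (shiftT^[n] y)⟫)) *
        ⟪cocyc B n x⟫ := by
    have h1 : ∀ z, cocyc B (n + 1) z = B (shiftT^[n] z) * cocyc B n z := by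
      intro z
      rw [add_comm, cocyc_add]
      simp [cocyc]
    rw [mul_sub, Units.inv_mul]
    simp only [hol, h1, _root_.mul_inv_rev, Units.val_mul]
    noncomm_ring
  have hd : distX (shiftT^[n] x) (shiftT^[n] y) ^ α ≤ (((2 : ℝ) ^ α) ^ n)⁻¹ := by
    refine (Real.rpow_le_rpow (distX_nonneg _ _) (distX_iterate_of_WsLoc hy n) hα.le).trans_eq ?_
    rw [← Real.rpow_pow_comm (by norm_num), Real.inv_rpow (by norm_num), inv_pow]
  have h2 : ‖⟪B (shiftT^[n] x)⟫ - ⟪B (shiftT^[n] y)⟫‖ ≤ |C| * (((2 : ℝ) ^ α) ^ n)⁻¹ :=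
    (hB _ _).trans (mul_le_mul (le_abs_self C) hd
      (Real.rpow_nonneg (distX_nonneg _ _) _) (abs_nonneg C))
  have ha : (0 : ℝ) < ((2 : ℝ) ^ α) ^ n := by positivity
  rw [e]
  calc _ ≤ ‖⟪(cocyc B n y)⁻¹⟫‖ * (M * (|C| * (((2 : ℝ) ^ α) ^ n)⁻¹)) * ‖⟪cocyc B n x⟫‖ := by
        refine (norm_mul_le _ _).trans ?_
        gcongr
        refine (norm_mul_le _ _).trans ?_
        gcongr
        refine (norm_mul_le _ _).trans ?_
        gcongr
        exact hBM' _
    _ = (M * (|C| * (((2 : ℝ) ^ α) ^ n)⁻¹)) *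
          (‖⟪cocyc B n x⟫‖ * ‖⟪(cocyc B n y)⁻¹⟫‖) := by ring
    _ ≤ (M * (|C| * (((2 : ℝ) ^ α) ^ n)⁻¹)) * (K * (σ * (2 : ℝ) ^ α) ^ n) := by gcongr
    _ = _ := by rw [mul_pow]; field_simp

/-! ### Balancing the two error terms -/

/-- A quantity bounded by `θ ^ n + Λ ^ n * D ^ α` for every `n` is `O(D ^ β)`, where the exponent `β`
depends only on `α`, `θ` and `Λ`. -/
theorem exists_interp_exponent {α θ Λ : ℝ} (hα : 0 < α) (hθ : 0 < θ) (hθ1 : θ < 1)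
    (hΛ : 1 < Λ) :
    ∃ β ∈ Set.Ioo 0 α, ∀ K u D : ℝ, 0 ≤ K → 0 ≤ D → D ≤ 1 →
      (∀ n : ℕ, u ≤ K * (θ ^ n + Λ ^ n * D ^ α)) → u ≤ K * (θ⁻¹ + 1) * D ^ β := by
  have hlΛ : 0 < Real.log Λ := Real.log_pos hΛ
  have hlθ : Real.log θ < 0 := Real.log_neg hθ hθ1
  -- With `n ≈ η * (-log D)`, this `η` makes `Λ ^ n` equal to about `D ^ (-α / 2)`.
  set η : ℝ := α / 2 / Real.log Λ with hη
  have hη0 : 0 < η := by positivity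
  have hβ0 : 0 < min (α / 2) (η * -Real.log θ) :=
    lt_min (by positivity) (mul_pos hη0 (by linarith))
  refine ⟨min (α / 2) (η * -Real.log θ), ⟨hβ0, (min_le_left _ _).trans_lt (by linarith)⟩, ?_⟩
  set β := min (α / 2) (η * -Real.log θ) with hβ
  intro K u D hK hD hD1 h
  rcases hD.eq_or_lt with rfl | hD
    -- For `D = 0` there is no optimal `n`: let `n` tend to infinity.
  · rw [Real.zero_rpow hβ0.ne', mul_zero]
    simp only [Real.zero_rpow hα.ne', mul_zero, add_zero] at h
    have hz : Tendsto (fun n : ℕ => K * θ ^ n) atTop (nhds 0) := by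
      simpa using (tendsto_pow_atTop_nhds_zero_of_lt_one hθ.le hθ1).const_mul K
    exact ge_of_tendsto' hz h
  · set t : ℝ := -Real.log D with ht
    have ht0 : 0 ≤ t := by have := Real.log_nonpos hD.le hD1; linarith
    have hpow : ∀ s : ℝ, D ^ s = Real.exp (-t * s) := fun s => by
      rw [Real.rpow_def_of_pos hD, ht, neg_neg]
    set n : ℕ := ⌊η * t⌋₊ with hn
    have hn1 : (n : ℝ) ≤ η * t := Nat.floor_le (by positivity)
    have hn2 : η * t < n + 1 := Nat.lt_floor_add_one _
    have hb1 : t * β ≤ t * (α / 2) := by gcongr; exact min_le_left _ _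
    have hb2 : t * β ≤ t * (η * -Real.log θ) := by gcongr; exact min_le_right _ _
    have h1 : θ ^ n ≤ θ⁻¹ * D ^ β := by
      have h3 : θ ^ n = Real.exp (n * Real.log θ) := by
        rw [Real.exp_nat_mul, Real.exp_log hθ]
      have h4 : θ⁻¹ = Real.exp (-Real.log θ) := by rw [Real.exp_neg, Real.exp_log hθ]
      rw [hpow, h3, h4, ← Real.exp_add, Real.exp_le_exp]
      nlinarith
    have h2 : Λ ^ n * D ^ α ≤ D ^ β := by
      have h3 : Λ ^ n = Real.exp (n * Real.log Λ) := by
        rw [Real.exp_nat_mul, Real.exp_log (by linarith)]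
      rw [hpow, hpow, h3, ← Real.exp_add, Real.exp_le_exp]
      have h4 : n * Real.log Λ ≤ η * t * Real.log Λ := by gcongr
      have h5 : η * t * Real.log Λ = t * (α / 2) := by rw [hη]; field_simp
      nlinarith
    refine (h n).trans ?_
    rw [mul_assoc]
    gcongr
    linarith

/-! ### Holonomies with an exponent uniform over cocycles -/

/-- Existence of Hölder stable holonomies, with an exponent that depends only on `α`, `τ`, the bunching
time `N` and the bound `M` on the cocycle and its inverse, and in particular not on its Hölder
constant. -/
theorem exists_uniform_exponent (α τ M : ℝ) (N : ℕ) (hα : 0 < α) (hτ : τ < 1) (hM : 1 ≤ M)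
    (hN : 0 < N) :
    ∃ β ∈ Set.Ioo (0 : ℝ) α, ∀ B : XX ℓ → GL (Fin d) ℝ, (∃ C, HolderOn α C B) →
      (∀ x, ‖⟪B x⟫‖ ≤ M) → (∀ x, ‖⟪(B x)⁻¹⟫‖ ≤ M) →
      (∀ x, ‖⟪cocyc B N x⟫‖ * ‖⟪(cocyc B N x)⁻¹⟫‖ ≤ τ * ((2 : ℝ) ^ α) ^ N) →
      ∃ C', IsHolderStableHolonomies β C' B := by
  have ha : (1 : ℝ) < 2 ^ α := Real.one_lt_rpow (by norm_num) hα
  obtain ⟨σ, ⟨hσ1, hσ0, hστ, hσa⟩⟩ : ∃ σ : ℝ, σ < 1 ∧ 0 < σ ∧ τ < σ ^ N ∧ 1 < σ * 2 ^ α := by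
    have c1 : ∀ᶠ σ : ℝ in nhds 1, τ < σ ^ N :=
      (continuous_pow N).continuousAt.eventually (lt_mem_nhds (by simpa using hτ))
    have c2 : ∀ᶠ σ : ℝ in nhds 1, 1 < σ * 2 ^ α :=
      (continuous_mul_const ((2 : ℝ) ^ α)).continuousAt.eventually (lt_mem_nhds (by simpa using ha))
    have c3 : ∀ᶠ σ : ℝ in nhds 1, 0 < σ := lt_mem_nhds one_pos
    have c4 : ∀ᶠ σ : ℝ in nhdsWithin 1 (Set.Iio 1), σ < 1 := self_mem_nhdsWithin
    obtain ⟨σ, h⟩ := (c4.and ((c3.and (c1.and c2)).filter_mono nhdsWithin_le_nhds)).exists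
    exact ⟨σ, h.1, h.2.1, h.2.2.1, h.2.2.2⟩
  have hΛ : 1 < 2 * M ^ 4 * (2 : ℝ) ^ α := by nlinarith [one_le_pow₀ (n := 4) hM]
  obtain ⟨β, hβ, hint⟩ := exists_interp_exponent hα hσ0 hσ1 hΛ
  refine ⟨β, hβ, ?_⟩
  rintro B ⟨C, hB⟩ hBM hBM' hQ
  obtain ⟨m, hm⟩ := mixed_block hα hB hM hBM hBM' hστ hQ
  set K₁ : ℝ := M ^ (2 * (m + N)) * M * |C| / (1 - σ) with hK₁
  have hK₁0 : 0 ≤ K₁ := by have : 0 < 1 - σ := by linarith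
                           positivity
  have hlim : ∀ x y : XX ℓ, y ∈ WsLoc x → ∃ L, Tendsto (fun n => hol B n x y) atTop (nhds L) ∧
      ∀ n, ‖hol B n x y - L‖ ≤ K₁ * σ ^ n := fun x y hy =>
    exists_lim_of_geometric hσ1 fun n =>
      hol_step hα hB hM hBM' hy n (mixed_growth hN hM hBM hBM' hσa.le hm hy n)
  have htend : ∀ x y : XX ℓ, y ∈ WsLoc x → Tendsto (fun n => hol B n x y) atTop
      (nhds (stableHolM (fun z => (B z : Matrix (Fin d) (Fin d) ℝ)) x y)) := by
    intro x y hy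
    obtain ⟨L, hL, -⟩ := hlim x y hy
    rwa [stableHolM_eq hL]
  have hrate : ∀ x y : XX ℓ, y ∈ WsLoc x → ∀ n,
      ‖hol B n x y - stableHolM (fun z => (B z : Matrix (Fin d) (Fin d) ℝ)) x y‖ ≤
        K₁ * σ ^ n := by
    intro x y hy
    obtain ⟨L, hL, h⟩ := hlim x y hy
    rwa [stableHolM_eq hL]
  have hself : ∀ x : XX ℓ,
      stableHolM (fun z => (B z : Matrix (Fin d) (Fin d) ℝ)) x x = 1 := fun x =>
    stableHolM_eq (by simp [hol])
  have hholder : ∀ x x' y y' : XX ℓ, y ∈ WsLoc x → y' ∈ WsLoc x' →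
      ‖stableHolM (fun w => (B w : Matrix (Fin d) (Fin d) ℝ)) x y -
        stableHolM (fun w => (B w : Matrix (Fin d) (Fin d) ℝ)) x' y'‖ ≤
      (2 * K₁ + 2 * |C|) * (σ⁻¹ + 1) * (distX x x' ^ β + distX y y' ^ β) := by
    intro x x' y y' hy hy'
    set D := max (distX x x') (distX y y') with hD
    have hD0 : 0 ≤ D := (distX_nonneg x x').trans (le_max_left _ _)
    have hu := hint (2 * K₁ + 2 * |C|)
      ‖stableHolM (fun w => (B w : Matrix (Fin d) (Fin d) ℝ)) x y -
        stableHolM (fun w => (B w : Matrix (Fin d) (Fin d) ℝ)) x' y'‖ D (by positivity)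
      hD0 (max_le (distX_le_one _ _) (distX_le_one _ _)) (fun n => by
        have h1 := hrate x y hy n
        have h2 := hrate x' y' hy' n
        have h3 := hol_crude hα hB hM hBM hBM' n (le_max_left _ _ : distX x x' ≤ D)
          (le_max_right _ _ : distX y y' ≤ D)
        have h4 : 0 ≤ (2 * M ^ 4 * (2 : ℝ) ^ α) ^ n * D ^ α := by positivity
        have h5 : 0 ≤ σ ^ n := by positivity
        rw [norm_sub_rev] at h1
        have e := (norm_add₃_le (a := stableHolM (fun w => (B w : Matrix (Fin d) (Fin d) ℝ)) x y -
            hol B n x y) (b := hol B n x y - hol B n x' y')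
          (c := hol B n x' y' - stableHolM (fun w => (B w : Matrix (Fin d) (Fin d) ℝ)) x' y'))
        rw [sub_add_sub_cancel, sub_add_sub_cancel] at e
        nlinarith [abs_nonneg C, mul_nonneg hK₁0 h4, mul_nonneg (abs_nonneg C) h5])
    refine hu.trans ?_
    have h0 : 0 ≤ distX x x' ^ β := Real.rpow_nonneg (distX_nonneg _ _) _
    have h0' : 0 ≤ distX y y' ^ β := Real.rpow_nonneg (distX_nonneg _ _) _
    gcongr
    rcases max_choice (distX x x') (distX y y') with h | h <;> rw [hD, h] <;> linarith
  refine ⟨(2 * K₁ + 2 * |C|) * (σ⁻¹ + 1), ?_, hself, ?_, ?_, ?_, hholder⟩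
  · intro x y hy
    simpa only [cocycM_inv_mul] using htend x y hy
  · intro x y z hy hz
    have hz' : z ∈ WsLoc y := fun n hn => (hz n hn).trans (hy n hn).symm
    refine tendsto_nhds_unique ((htend y z hz').mul (htend x y hy)) ?_
    refine (htend x z hz).congr fun n => ?_
    simp only [hol, ← Units.val_mul]
    congr 1
    group
  · intro x y hy
    have hy' : shiftT y ∈ WsLoc (shiftT x) := fun n hn => hy (n + 1) (by omega)
    refine tendsto_nhds_unique
      (((htend x y hy).comp (tendsto_add_atTop_nat 1)).const_mul ⟪B y⟫) ?_
    refine ((htend _ _ hy').mul_const ⟪B x⟫).congr fun n => ?_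
    simp only [hol, ← Units.val_mul, Function.comp, cocyc]
    congr 1
    group
  · intro x y hy
    have h := hholder x x y x hy (fun _ _ => rfl)
    rw [hself, distX_self, Real.zero_rpow hβ.1.ne', zero_add, distX_comm y x] at h
    exact h

/-- The suprema defining `unifDist` are genuine, and not the junk value `0`, when both cocycles and
their inverses are bounded. -/
theorem le_unifDist {A B : XX ℓ → GL (Fin d) ℝ} {M : ℝ} (hA : ∀ x, ‖⟪A x⟫‖ ≤ M)
    (hA' : ∀ x, ‖⟪(A x)⁻¹⟫‖ ≤ M) (hB : ∀ x, ‖⟪B x⟫‖ ≤ M) (hB' : ∀ x, ‖⟪(B x)⁻¹⟫‖ ≤ M) (x : XX ℓ) :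
    ‖⟪A x⟫ - ⟪B x⟫‖ ≤ unifDist A B ∧ ‖⟪(A x)⁻¹⟫ - ⟪(B x)⁻¹⟫‖ ≤ unifDist A B := by
  have b1 : BddAbove (Set.range fun x => ‖⟪A x⟫ - ⟪B x⟫‖) :=
    ⟨M + M, by rintro _ ⟨x, rfl⟩; exact (norm_sub_le _ _).trans (add_le_add (hA x) (hB x))⟩
  have b2 : BddAbove (Set.range fun x => ‖⟪(A x)⁻¹⟫ - ⟪(B x)⁻¹⟫‖) :=
    ⟨M + M, by rintro _ ⟨x, rfl⟩; exact (norm_sub_le _ _).trans (add_le_add (hA' x) (hB' x))⟩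
  have h1 := le_ciSup b1 x
  have h2 := le_ciSup b2 x
  have p1 := (norm_nonneg _).trans h1
  have p2 := (norm_nonneg _).trans h2
  unfold unifDist supDist
  exact ⟨by linarith, by linarith⟩

/-- The bunching quantity at a fixed time depends continuously on the cocycle in the `C⁰` topology. -/
theorem bunching_of_close {A B : XX ℓ → GL (Fin d) ℝ} {M ε : ℝ} (hM : 1 ≤ M)
    (hA : ∀ x, ‖⟪A x⟫‖ ≤ M) (hA' : ∀ x, ‖⟪(A x)⁻¹⟫‖ ≤ M)
    (hB : ∀ x, ‖⟪B x⟫‖ ≤ M) (hB' : ∀ x, ‖⟪(B x)⁻¹⟫‖ ≤ M) (hε : 0 ≤ ε)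
    (h : ∀ x, ‖⟪A x⟫ - ⟪B x⟫‖ ≤ ε) (n : ℕ) (x : XX ℓ) :
    ‖⟪cocyc B n x⟫‖ * ‖⟪(cocyc B n x)⁻¹⟫‖ ≤
      ‖⟪cocyc A n x⟫‖ * ‖⟪(cocyc A n x)⁻¹⟫‖ + 2 * n * M ^ (4 * n) * ε := by
  have hP := norm_cocyc_sub_le hM hA hB hε n x x (fun j _ => h _)
  have hI := (norm_inv_sub_inv_le (cocyc A n x) (cocyc B n x) (norm_cocyc_inv_le hM hA' n x)
    (norm_cocyc_inv_le hM hB' n x)).trans (mul_le_mul_of_nonneg_left hP (by positivity))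
  have h1 : ‖⟪cocyc B n x⟫‖ ≤ ‖⟪cocyc A n x⟫‖ + n * M ^ n * ε := by
    rw [norm_sub_rev] at hP
    linarith [norm_le_norm_add_norm_sub' ⟪cocyc B n x⟫ ⟪cocyc A n x⟫]
  have h2 : ‖⟪(cocyc B n x)⁻¹⟫‖ ≤
      ‖⟪(cocyc A n x)⁻¹⟫‖ + (M ^ n) ^ 2 * (n * M ^ n * ε) := by
    rw [norm_sub_rev] at hI
    linarith [norm_le_norm_add_norm_sub' ⟪(cocyc B n x)⁻¹⟫ ⟪(cocyc A n x)⁻¹⟫]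
  have hM2 : M ^ (2 * n) ≤ M ^ (4 * n) := pow_le_pow_right₀ hM (by omega)
  calc _ ≤ ‖⟪cocyc B n x⟫‖ *
        (‖⟪(cocyc A n x)⁻¹⟫‖ + (M ^ n) ^ 2 * (n * M ^ n * ε)) := by gcongr
    _ = ‖⟪cocyc B n x⟫‖ * ‖⟪(cocyc A n x)⁻¹⟫‖ +
        ‖⟪cocyc B n x⟫‖ * ((M ^ n) ^ 2 * (n * M ^ n * ε)) := by ring
    _ ≤ (‖⟪cocyc A n x⟫‖ + n * M ^ n * ε) * ‖⟪(cocyc A n x)⁻¹⟫‖ +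
        M ^ n * ((M ^ n) ^ 2 * (n * M ^ n * ε)) := by
        gcongr
        exact norm_cocyc_le hM hB n x
    _ = ‖⟪cocyc A n x⟫‖ * ‖⟪(cocyc A n x)⁻¹⟫‖ + (n * M ^ n * ε) * ‖⟪(cocyc A n x)⁻¹⟫‖ +
        M ^ (4 * n) * n * ε := by ring
    _ ≤ ‖⟪cocyc A n x⟫‖ * ‖⟪(cocyc A n x)⁻¹⟫‖ + (n * M ^ n * ε) * M ^ n +
        M ^ (4 * n) * n * ε := by
        gcongr
        exact norm_cocyc_inv_le hM hA' n x
    _ = ‖⟪cocyc A n x⟫‖ * ‖⟪(cocyc A n x)⁻¹⟫‖ + M ^ (2 * n) * n * ε +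
        M ^ (4 * n) * n * ε := by ring
    _ ≤ ‖⟪cocyc A n x⟫‖ * ‖⟪(cocyc A n x)⁻¹⟫‖ + M ^ (4 * n) * n * ε +
        M ^ (4 * n) * n * ε := by gcongr
    _ = _ := by ring

/-- Theorem: existence of Hölder stable holonomies.
If `A` is `α`-Hölder and fiber bunched with constant `τ < 1`, then there is
`0 < β < α` such that `A` admits `β`-Hölder stable holonomies; moreover `β` can be
taken uniform on a `C⁰` neighborhood of `A` (for cocycles with the same Hölder
exponent and bunching constant). -/
theorem existence_of_holder_stable_holonomies
    {ℓ d : ℕ} (hℓ : 0 < ℓ)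
    (α τ CA : ℝ) (hα : 0 < α) (hτ : τ < 1)
    (A : XX ℓ → GL (Fin d) ℝ)
    (hHolder : HolderOn α CA A)
    (hFB : ∃ N : ℕ, 0 < N ∧ ∀ x : XX ℓ,
      ‖(cocyc A N x : Matrix (Fin d) (Fin d) ℝ)‖ *
        ‖(((cocyc A N x)⁻¹ : GL (Fin d) ℝ) : Matrix (Fin d) (Fin d) ℝ)‖ *
        (2 : ℝ) ^ (-(N : ℝ) * α) < τ) :
    ∃ β ∈ Set.Ioo (0 : ℝ) α,
      (∃ C : ℝ, IsHolderStableHolonomies β C A) ∧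
      ∃ δ : ℝ, 0 < δ ∧
        ∀ B : XX ℓ → GL (Fin d) ℝ, unifDist A B < δ →
          (∃ CB : ℝ, HolderOn α CB B) →
          (∃ N : ℕ, 0 < N ∧ ∀ x : XX ℓ,
            ‖(cocyc B N x : Matrix (Fin d) (Fin d) ℝ)‖ *
              ‖(((cocyc B N x)⁻¹ : GL (Fin d) ℝ) : Matrix (Fin d) (Fin d) ℝ)‖ *
              (2 : ℝ) ^ (-(N : ℝ) * α) < τ) →
          ∃ CB' : ℝ, IsHolderStableHolonomies β CB' B := by
  obtain ⟨N, hN, hQ⟩ := hFB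
  obtain ⟨M₀, hM₀, hA, hA'⟩ := hHolder.exists_bound hα
  -- The extra `1` leaves room for cocycles at distance at most `1` from `A`.
  set M := M₀ + 1 with hM_def
  have hM : 1 ≤ M := by linarith
  have hAM : ∀ x, ‖⟪A x⟫‖ ≤ M := fun x => (hA x).trans (by linarith)
  have hAM' : ∀ x, ‖⟪(A x)⁻¹⟫‖ ≤ M := fun x => (hA' x).trans (by linarith)
  have ha : (1 : ℝ) < 2 ^ α := Real.one_lt_rpow (by norm_num) hα
  have haN : (1 : ℝ) ≤ ((2 : ℝ) ^ α) ^ N := one_le_pow₀ ha.le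
  have hQA : ∀ x, ‖⟪cocyc A N x⟫‖ * ‖⟪(cocyc A N x)⁻¹⟫‖ ≤ τ * ((2 : ℝ) ^ α) ^ N := by
    intro x
    have h := hQ x
    have e : (2 : ℝ) ^ (-(N : ℝ) * α) = (((2 : ℝ) ^ α) ^ N)⁻¹ := by
      rw [← Real.rpow_natCast, ← Real.rpow_mul (by norm_num), ← Real.rpow_neg (by norm_num)]
      congr 1; ring
    rw [e, ← div_eq_mul_inv, div_lt_iff₀ (by positivity)] at h
    exact h.le
  obtain ⟨β, hβ, H⟩ := exists_uniform_exponent (ℓ := ℓ) (d := d) α ((τ + 1) / 2) M N hα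
    (by linarith) hM hN
  refine ⟨β, hβ, H A ⟨CA, hHolder⟩ hAM hAM' fun x => (hQA x).trans ?_, ?_⟩
  · gcongr
    linarith
  have hN0 : (0 : ℝ) < N := by exact_mod_cast hN
  have hM0 : 0 < M := by linarith
  refine ⟨min 1 ((1 - τ) / 2 / (2 * N * M ^ (4 * N))),
    lt_min one_pos (div_pos (by linarith) (by positivity)), ?_⟩
  rintro B hAB ⟨CB, hCB⟩ -
  -- This bound depends on `B`; it only serves to make the suprema in `unifDist A B` finite.
  obtain ⟨M₁, hM₁, hB, hB'⟩ := hCB.exists_bound hα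
  have hdist := le_unifDist (M := max M₀ M₁) (fun x => (hA x).trans (le_max_left _ _))
    (fun x => (hA' x).trans (le_max_left _ _)) (fun x => (hB x).trans (le_max_right _ _))
    (fun x => (hB' x).trans (le_max_right _ _))
  have hδ1 : unifDist A B ≤ 1 := hAB.le.trans (min_le_left _ _)
  have hδ2 : unifDist A B ≤ (1 - τ) / 2 / (2 * N * M ^ (4 * N)) := hAB.le.trans (min_le_right _ _)
  have hBM : ∀ x, ‖⟪B x⟫‖ ≤ M := fun x => by
    have := norm_le_norm_add_norm_sub ⟪A x⟫ ⟪B x⟫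
    linarith [hA x, (hdist x).1]
  have hBM' : ∀ x, ‖⟪(B x)⁻¹⟫‖ ≤ M := fun x => by
    have := norm_le_norm_add_norm_sub ⟪(A x)⁻¹⟫ ⟪(B x)⁻¹⟫
    linarith [hA' x, (hdist x).2]
  have hε : 0 ≤ (1 - τ) / 2 / (2 * N * M ^ (4 * N)) :=
    div_nonneg (by linarith) (by positivity)
  refine H B ⟨CB, hCB⟩ hBM hBM' fun x => ?_
  have h := bunching_of_close hM hAM hAM' hBM hBM' hε
    (fun x => (hdist x).1.trans hδ2) N x
  rw [mul_div_cancel₀ _ (by positivity)] at h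
  have h3 : (1 - τ) / 2 * 1 ≤ (1 - τ) / 2 * ((2 : ℝ) ^ α) ^ N :=
    mul_le_mul_of_nonneg_left haN (by linarith)
  linarith [hQA x]
end
end
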